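/- arXiv:2504.14674 — 2 statements merged into one kernel-verified Lean document; each statement's English description precedes it below -/
import Mathlib

section
/- Let m = 2h + 1 ≥ 7 be odd and let f₂(x) = x^{3·2^{(m+1)/2} + 4} + x^{2^{(m+1)/2} + 2} + x^{2^{(m+1)/2}}. For the binary sequence s_t = Tr(f₂(α^t + 1)), the minimal polynomial of the sequence is g_s(x) = (x − 1)·m_{α^{−3}}(x)·m_{α^{−(2^{h−1}+1)}}(x)·m_{α^{−(2^h+2^{h−1}+1)}}(x), which has degree 3m + 1; consequently the binary cyclic code C_s has length 2^m − 1 and 𝔽₂-dimension 2^m − 2 − 3m, and its minimum distance satisfies 4 ≤ d(C_s) ≤ 8. -/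
open Polynomial
open scoped Classical

/-- The polynomial S(x) = ∑_{t=0}^{v−1} s_t x^t ∈ 𝔽₂[x], where
    s_t = Tr(f(α^t + 1)) and v = 2^m − 1. -/
noncomputable def traceSeqPoly (m : ℕ) (α : GaloisField 2 m)
    (f : GaloisField 2 m → GaloisField 2 m) : Polynomial (ZMod 2) :=
  ∑ t ∈ Finset.range (2 ^ m - 1),
    C (Algebra.trace (ZMod 2) (GaloisField 2 m) (f (α ^ t + 1))) * X ^ t

/-- The minimal polynomial of the sequence:
    g_s(x) = (x^v − 1)/gcd(x^v − 1, S(x)). Its degree is the linear span L_s. -/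
noncomputable def genPoly (m : ℕ) (α : GaloisField 2 m)
    (f : GaloisField 2 m → GaloisField 2 m) : Polynomial (ZMod 2) :=
  (X ^ (2 ^ m - 1) - 1) /
    EuclideanDomain.gcd (X ^ (2 ^ m - 1) - 1) (traceSeqPoly m α f)

/-- The binary cyclic code C_s = {c ∈ 𝔽₂[x] : deg c < v and g_s ∣ c},
    as an 𝔽₂-submodule of 𝔽₂[x]. -/
noncomputable def codeC (m : ℕ) (α : GaloisField 2 m)
    (f : GaloisField 2 m → GaloisField 2 m) :
    Submodule (ZMod 2) (Polynomial (ZMod 2)) :=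
  Polynomial.degreeLT (ZMod 2) (2 ^ m - 1) ⊓
    (Ideal.span {genPoly m α f}).restrictScalars (ZMod 2)

/-- The set of Hamming weights (numbers of nonzero coefficients) of the
    nonzero codewords of a code; the minimum distance is its least element. -/
def wtSet (Cs : Submodule (ZMod 2) (Polynomial (ZMod 2))) : Set ℕ :=
  {w | ∃ c : Polynomial (ZMod 2), c ∈ Cs ∧ c ≠ 0 ∧ c.support.card = w}

/-! The trace does not distinguish `y ^ 2` from `y`, and up to this `f₂ (x + 1)` expands to
`1 + x ^ 3 + x ^ (2 ^ (h - 1) + 1) + x ^ (2 ^ h + 2 ^ (h - 1) + 1)`; so the sequence is the sum of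
four sequences `Tr (β⁻¹ ^ t)` with `β` a power of `α⁻¹`. By geometric sums, `S γ` counts modulo 2
the automorphisms sending one of the `β`s to `γ`, hence (`m` being odd) the `β`s conjugate to `γ`.
If the `β`s are pairwise nonconjugate, `g_s` is therefore the product of their minimal polynomials.
Conjugate powers of `α⁻¹` are those whose exponents have the same binary digits up to rotation, so
nonconjugacy and the degrees are read off from four subsets of `ℤ/m`.

Words of the code have even weight since `X - 1 ∣ g_s`, and weight 2 is excluded because the root
`α⁻¹ ^ 3` still has order `2 ^ m - 1`. Conversely there are more words of weight 4 than residues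
modulo `g_s`, so two of them differ by a codeword, of weight at most 8. -/

section Arithmetic

lemma two_pow_three_mul_add_one_lt_choose {m : ℕ} (hm : 7 ≤ m) :
    2 ^ (3 * m + 1) < (2 ^ m - 1).choose 4 := by
  obtain ⟨N, hN⟩ := Nat.exists_eq_add_of_le (Nat.pow_le_pow_right two_pos hm : 2 ^ 7 ≤ 2 ^ m)
  have h := (2 ^ m - 1).pow_sub_le_descFactorial 4
  rw [Nat.descFactorial_eq_factorial_mul_choose, hN,
    show 2 ^ 7 + N - 1 + 1 - 4 = N + 124 by omega] at h
  have hpoly : 24 * (2 * (2 ^ 7 + N) ^ 3) < (N + 124) ^ 4 := by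
    ring_nf
    nlinarith
  rw [pow_succ', mul_comm 3 m, pow_mul, hN]
  exact lt_of_mul_lt_mul_left (hpoly.trans_le h) (Nat.zero_le 24)

lemma coprime_two_pow_sub_one_three {m : ℕ} (hm : Odd m) : Nat.Coprime (2 ^ m - 1) 3 := by
  have hgcd := Nat.pow_sub_one_gcd_pow_sub_one 2 m 2
  rwa [Nat.coprime_two_right.2 hm] at hgcd

end Arithmetic

section Division

lemma associated_div_gcd {R : Type*} [EuclideanDomain R] [DecidableEq R] {P g S : R}
    (hP : P ≠ 0) (hgP : g ∣ P) (hgS : IsCoprime g S) (hdvd : P ∣ g * S) :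
    Associated (P / EuclideanDomain.gcd P S) g := by
  obtain ⟨H, rfl⟩ := hgP
  have hg : g ≠ 0 := left_ne_zero_of_mul hP
  have hgcd : Associated H (EuclideanDomain.gcd (g * H) S) := by
    refine associated_of_dvd_dvd
      (EuclideanDomain.dvd_gcd (dvd_mul_left _ _) ((mul_dvd_mul_iff_left hg).1 hdvd)) ?_
    refine IsCoprime.dvd_of_dvd_mul_left ?_ (EuclideanDomain.gcd_dvd_left _ _)
    exact (hgS.of_isCoprime_of_dvd_right (EuclideanDomain.gcd_dvd_right _ _)).symm
  obtain ⟨u, hu⟩ := hgcd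
  have hH : H * u ≠ 0 := mul_ne_zero (right_ne_zero_of_mul hP) u.ne_zero
  refine ⟨u, ?_⟩
  rw [← hu, ← mul_right_inj' hH]
  calc H * u * (g * H / (H * u) * u) = H * u * (g * H / (H * u)) * u := by ring
    _ = g * H * u := by
      have hdiv : H * u ∣ g * H := (Units.mul_right_dvd.2 dvd_rfl).trans (dvd_mul_left H g)
      rw [EuclideanDomain.mul_div_cancel' hH hdiv]
    _ = H * u * g := by ring

lemma monic_of_ne_zero {p : (ZMod 2)[X]} (hp : p ≠ 0) : p.Monic := by
  have hlead : p.leadingCoeff ≠ 0 := leadingCoeff_ne_zero.2 hp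
  exact Fin.eq_one_of_ne_zero _ hlead

end Division

section FiniteField

variable {K L : Type*} [Field K] [Field L] [Finite L] [Algebra K L]

lemma pow_natCard_sub_one_eq_one {x : L} (hx : x ≠ 0) : x ^ (Nat.card L - 1) = 1 := by
  have := Fintype.ofFinite L
  rw [Nat.card_eq_fintype_card, FiniteField.pow_card_sub_one_eq_one x hx]

lemma sum_range_pow_eq_ite {x : L} (hx : x ≠ 0) :
    ∑ t ∈ Finset.range (Nat.card L - 1), x ^ t = if x = 1 then -1 else 0 := by
  split_ifs with h
  · have := Fintype.ofFinite L
    rw [h]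
    simp only [one_pow, Finset.sum_const, Finset.card_range, nsmul_one]
    rw [Nat.cast_sub Nat.card_pos, Nat.card_eq_fintype_card, FiniteField.cast_card_eq_zero,
      Nat.cast_one, zero_sub]
  · have hgeom := mul_geom_sum x (Nat.card L - 1)
    rw [pow_natCard_sub_one_eq_one hx, sub_self] at hgeom
    exact (mul_eq_zero.1 hgeom).resolve_left (sub_ne_zero.2 h)

lemma X_pow_card_sub_one_dvd {P : K[X]} (hP : ∀ x : L, x ≠ 0 → aeval x P = 0) :
    X ^ (Nat.card L - 1) - 1 ∣ P := by
  obtain ⟨ζ, hζ⟩ := IsCyclic.exists_generator (α := Lˣ)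
  have hprim : IsPrimitiveRoot (ζ : L) (Nat.card L - 1) := by
    rw [IsPrimitiveRoot.coe_units_iff, ← Nat.card_units, ← orderOf_eq_card_of_forall_mem_zpowers hζ]
    exact IsPrimitiveRoot.orderOf ζ
  have hpos : 0 < Nat.card L - 1 := Nat.sub_pos_of_lt Finite.one_lt_card
  rw [← map_dvd_map' (algebraMap K L), Polynomial.map_sub, Polynomial.map_pow, map_X,
    Polynomial.map_one, X_pow_sub_one_eq_prod hpos hprim]
  refine Finset.prod_dvd_of_coprime
    (fun a _ b _ hab ↦ pairwise_coprime_X_sub_C Function.injective_id hab) fun x hx ↦ ?_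
  rw [dvd_iff_isRoot, IsRoot, eval_map_algebraMap]
  refine hP x fun hx0 ↦ ?_
  rw [mem_nthRootsFinset hpos, hx0, zero_pow hpos.ne'] at hx
  exact zero_ne_one hx

open scoped Pointwise in
lemma odd_card_filter_smul_eq {G X : Type*} [Group G] [Fintype G] [MulAction G X]
    (hG : Odd (Nat.card G)) {x y : X} (hxy : ∃ g : G, g • x = y) :
    Odd (Finset.card {g : G | g • x = y}) := by
  obtain ⟨g₀, rfl⟩ := hxy
  have hcoset : {g : G | g • x = g₀ • x} = g₀ • (MulAction.stabilizer G x : Set G) := by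
    ext g
    rw [Set.mem_smul_set_iff_inv_smul_mem, SetLike.mem_coe, MulAction.mem_stabilizer_iff,
      smul_eq_mul, mul_smul, inv_smul_eq_iff, Set.mem_ofPred_eq]
  have hcard : Finset.card {g : G | g • x = g₀ • x} = Nat.card (MulAction.stabilizer G x) := by
    rw [← Set.ncard_coe_finset, Finset.coe_filter_univ, hcoset, Set.ncard_smul_set]
    rfl
  exact hcard ▸ hG.of_dvd_nat (Subgroup.card_subgroup_dvd_card _)

lemma sum_trace_inv_pow_mul_pow {β γ : L} (hβ : β ≠ 0) (hγ : γ ≠ 0) :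
    ∑ t ∈ Finset.range (Nat.card L - 1),
        algebraMap K L (Algebra.trace K L (β⁻¹ ^ t)) * γ ^ t =
      -(Finset.card {σ : Gal(L/K) | σ β = γ} : L) := by
  have := Module.Finite.of_finite (R := K) (M := L)
  have := Finite.of_injective _ (algebraMap K L).injective
  calc
    _ = ∑ σ : Gal(L/K), ∑ t ∈ Finset.range (Nat.card L - 1), ((σ β)⁻¹ * γ) ^ t := by
      simp only [trace_eq_sum_automorphisms, Finset.sum_mul, map_pow, map_inv₀, mul_pow]
      exact Finset.sum_comm
    _ = ∑ σ : Gal(L/K), if σ β = γ then -1 else 0 := by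
      refine Finset.sum_congr rfl fun σ _ ↦ ?_
      have hσ : σ β ≠ 0 := (map_ne_zero σ).2 hβ
      rw [sum_range_pow_eq_ite (mul_ne_zero (inv_ne_zero hσ) hγ)]
      simp only [inv_mul_eq_one₀ hσ]
    _ = _ := by simp [Finset.sum_ite]

lemma sum_trace_inv_pow_mul_pow_eq_ite [CharP L 2] (hodd : Odd (Module.finrank K L)) {β γ : L}
    (hβ : β ≠ 0) (hγ : γ ≠ 0) :
    ∑ t ∈ Finset.range (Nat.card L - 1),
        algebraMap K L (Algebra.trace K L (β⁻¹ ^ t)) * γ ^ t =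
      if IsConjRoot K γ β then 1 else 0 := by
  have := Finite.of_injective _ (algebraMap K L).injective
  rw [sum_trace_inv_pow_mul_pow hβ hγ, CharTwo.neg_eq]
  split_ifs with h
  · rw [isConjRoot_iff_exists_algEquiv] at h
    rw [CharTwo.natCast_eq_ite, if_neg]
    rw [Nat.not_even_iff_odd]
    exact odd_card_filter_smul_eq (by rwa [IsGalois.card_aut_eq_finrank]) h
  · rw [Finset.filter_false_of_mem, Finset.card_empty, Nat.cast_zero]
    exact fun σ _ hσ ↦ h (isConjRoot_iff_exists_algEquiv.2 ⟨σ, hσ⟩)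

lemma isCoprime_prod_minpoly {ι : Type*} [Fintype ι] {β : ι → L} {S : K[X]}
    (hS : ∀ i, aeval (β i) S ≠ 0) : IsCoprime (∏ i, minpoly K (β i)) S := by
  refine IsCoprime.prod_left fun i _ ↦ ?_
  rw [(minpoly.irreducible (Algebra.IsIntegral.isIntegral _)).coprime_iff_not_dvd, minpoly.dvd_iff]
  exact hS i

lemma prod_minpoly_dvd_X_pow_card_sub_one {ι : Type*} [Fintype ι] {β : ι → L}
    (hβ : ∀ i, β i ≠ 0) (hconj : Pairwise fun i j ↦ ¬ IsConjRoot K (β i) (β j)) :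
    ∏ i, minpoly K (β i) ∣ X ^ (Nat.card L - 1) - 1 := by
  refine Finset.prod_dvd_of_coprime (fun i _ j _ hij ↦ ?_) fun i _ ↦ minpoly.dvd _ _ ?_
  · change IsCoprime _ _
    rw [(minpoly.irreducible (Algebra.IsIntegral.isIntegral _)).coprime_iff_not_dvd,
      minpoly.dvd_iff, ← isConjRoot_iff_aeval_eq_zero (Algebra.IsIntegral.isIntegral _)]
    exact hconj hij.symm
  · simp [pow_natCard_sub_one_eq_one (hβ i)]

end FiniteField

section CyclicExponent

lemma pow_two_pow_mod {M : Type*} [Monoid M] {x : M} {m : ℕ} (hx : x ^ 2 ^ m = x) (n : ℕ) :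
    x ^ 2 ^ (n % m) = x ^ 2 ^ n := by
  have hper : Function.IsPeriodicPt (fun y : M ↦ y ^ 2) m x := by
    rw [Function.IsPeriodicPt, pow_iterate]
    exact hx
  simpa only [pow_iterate] using hper.iterate_mod_apply n

variable {m : ℕ} [NeZero m]

/-- The exponent `∑ k ∈ A, 2 ^ k` whose binary digits are indexed by `A`. The digit positions are
residues modulo `m`, so that doubling modulo `2 ^ m - 1` is the rotation `k ↦ k + 1`. -/
def binExp (A : Finset (ZMod m)) : ℕ := ∑ k ∈ A, 2 ^ k.val

lemma binExp_univ : binExp (Finset.univ : Finset (ZMod m)) = 2 ^ m - 1 := by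
  obtain ⟨n, rfl⟩ := Nat.exists_eq_succ_of_ne_zero (NeZero.ne m)
  calc ∑ k : ZMod (n + 1), 2 ^ k.val = ∑ k ∈ Finset.range (n + 1), 2 ^ k :=
        Fin.sum_univ_eq_sum_range (fun k ↦ 2 ^ k) (n + 1)
    _ = 2 ^ (n + 1) - 1 := by rw [Nat.geomSum_eq le_rfl, Nat.div_one]

lemma binExp_lt {A : Finset (ZMod m)} (hA : A ≠ Finset.univ) : binExp A < 2 ^ m - 1 := by
  obtain ⟨k, -, hk⟩ := Finset.exists_of_ssubset (Finset.ssubset_univ_iff.2 hA)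
  rw [← binExp_univ]
  exact Finset.sum_lt_sum_of_subset (Finset.subset_univ A) (Finset.mem_univ k) hk
    (by positivity) fun _ _ _ ↦ Nat.zero_le _

lemma binExp_injective : Function.Injective (binExp (m := m)) := by
  intro A B h
  have himage (C : Finset (ZMod m)) : binExp C = ∑ k ∈ C.image ZMod.val, 2 ^ k :=
    (Finset.sum_image (ZMod.val_injective m).injOn).symm
  rw [himage, himage] at h
  exact Finset.image_injective (ZMod.val_injective m) (Finset.geomSum_injective le_rfl h)

open scoped Pointwise in
lemma pow_binExp_pow_two_pow {M : Type*} [CommMonoid M] {x : M} (hx : x ^ 2 ^ m = x)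
    (A : Finset (ZMod m)) (i : ZMod m) :
    (x ^ binExp A) ^ 2 ^ i.val = x ^ binExp (i +ᵥ A) := by
  have hvadd : i +ᵥ A = A.image (i + ·) := rfl
  rw [binExp, binExp, hvadd, Finset.sum_image (add_right_injective i).injOn,
    ← Finset.prod_pow_eq_pow_sum, ← Finset.prod_pow_eq_pow_sum, ← Finset.prod_pow]
  refine Finset.prod_congr rfl fun k _ ↦ ?_
  rw [ZMod.val_add, pow_two_pow_mod hx, ← pow_mul, ← pow_add, add_comm]

lemma pow_binExp_injOn {M : Type*} [Monoid M] {ω : M} (hω : orderOf ω = 2 ^ m - 1) :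
    Set.InjOn (fun A : Finset (ZMod m) ↦ ω ^ binExp A) {A | A ≠ Finset.univ} := by
  intro A hA B hB h
  exact binExp_injective (pow_injOn_Iio_orderOf (hω ▸ binExp_lt hA) (hω ▸ binExp_lt hB) h)

end CyclicExponent

section Frobenius

variable {L : Type*} [Field L] [Finite L] [Algebra (ZMod 2) L]

lemma exists_algEquiv_apply_eq_pow_two_pow (σ : Gal(L/ZMod 2)) :
    ∃ i < Module.finrank (ZMod 2) L, ∀ x, σ x = x ^ 2 ^ i := by
  obtain ⟨i, rfl⟩ := (FiniteField.bijective_frobeniusAlgEquivOfAlgebraic_pow (ZMod 2) L).2 σ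
  refine ⟨i, i.2, fun x ↦ ?_⟩
  rw [AlgEquiv.coe_pow, FiniteField.coe_frobeniusAlgEquivOfAlgebraic_iterate, ZMod.card]

lemma trace_pow_two_pow (x : L) (k : ℕ) :
    Algebra.trace (ZMod 2) L (x ^ 2 ^ k) = Algebra.trace (ZMod 2) L x := by
  rw [← Algebra.trace_eq_of_algEquiv
    (FiniteField.frobeniusAlgEquivOfAlgebraic (ZMod 2) L ^ k) x, AlgEquiv.coe_pow,
    FiniteField.coe_frobeniusAlgEquivOfAlgebraic_iterate, ZMod.card]

lemma pow_two_pow_finrank (x : L) : x ^ 2 ^ Module.finrank (ZMod 2) L = x := by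
  have := Fintype.ofFinite L
  have hcard := Module.card_eq_pow_finrank (K := ZMod 2) (V := L)
  rw [ZMod.card] at hcard
  rw [← hcard, FiniteField.pow_card]

variable {m : ℕ} [NeZero m] {ω : L} {A B : Finset (ZMod m)}

open scoped Pointwise

lemma exists_algEquiv_apply_pow_binExp (hm : Module.finrank (ZMod 2) L = m)
    (σ : Gal(L/ZMod 2)) :
    ∃ i : ZMod m, (∀ x, σ x = x ^ 2 ^ i.val) ∧ ∀ (x : L) (A : Finset (ZMod m)),
      σ (x ^ binExp A) = x ^ binExp (i +ᵥ A) := by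
  obtain ⟨i, hi, hσ⟩ := exists_algEquiv_apply_eq_pow_two_pow σ
  have hval : (i : ZMod m).val = i := ZMod.val_cast_of_lt (hm ▸ hi)
  refine ⟨i, fun x ↦ by rw [hσ, hval], fun x A ↦ ?_⟩
  rw [← pow_binExp_pow_two_pow (hm ▸ pow_two_pow_finrank x), hσ, hval]

lemma exists_vadd_eq_of_isConjRoot_pow_binExp (hm : Module.finrank (ZMod 2) L = m)
    (hω : orderOf ω = 2 ^ m - 1) (hA : A ≠ Finset.univ) (hB : B ≠ Finset.univ)
    (h : IsConjRoot (ZMod 2) (ω ^ binExp A) (ω ^ binExp B)) : ∃ i : ZMod m, i +ᵥ A = B := by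
  obtain ⟨σ, hσ⟩ := h.symm.exists_algEquiv
  obtain ⟨i, -, hi⟩ := exists_algEquiv_apply_pow_binExp hm σ
  have hiA : i +ᵥ A ≠ Finset.univ := by rwa [Ne, Finset.vadd_finset_eq_univ]
  exact ⟨i, pow_binExp_injOn hω hiA hB ((hi ω A).symm.trans hσ)⟩

lemma natDegree_minpoly_pow_binExp (hm : Module.finrank (ZMod 2) L = m)
    (hω : orderOf ω = 2 ^ m - 1) (hA : A ≠ Finset.univ)
    (hstab : ∀ i : ZMod m, i +ᵥ A = A → i = 0) :
    (minpoly (ZMod 2) (ω ^ binExp A)).natDegree = m := by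
  refine Eq.trans ?_ hm
  rw [← Field.primitive_element_iff_minpoly_natDegree_eq,
    Field.primitive_element_iff_algHom_eq_of_eval (ZMod 2) L
      (fun x ↦ Normal.splits inferInstance x) _ (AlgHom.id (ZMod 2) L)]
  intro ψ hψ
  obtain ⟨σ, rfl⟩ := (Algebra.IsAlgebraic.algEquivEquivAlgHom (ZMod 2) L).surjective ψ
  obtain ⟨i, hpow, hi⟩ := exists_algEquiv_apply_pow_binExp hm σ
  have hiA : i +ᵥ A ≠ Finset.univ := by rwa [Ne, Finset.vadd_finset_eq_univ]
  have hi0 : i = 0 := hstab i (pow_binExp_injOn hω hiA hA ((hi ω A).symm.trans hψ.symm))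
  ext x
  change x = σ x
  rw [hpow, hi0, ZMod.val_zero, pow_zero, pow_one]

end Frobenius

section TraceExpansion

variable {L : Type*} [Field L] [Finite L] [Algebra (ZMod 2) L]

lemma trace_add_one_pow_sum (x : L) (k : ℕ) :
    Algebra.trace (ZMod 2) L ((x + 1) ^ (3 * 2 ^ (k + 2) + 4) + (x + 1) ^ (2 ^ (k + 2) + 2) +
        (x + 1) ^ 2 ^ (k + 2)) =
      Algebra.trace (ZMod 2) L 1 + Algebra.trace (ZMod 2) L (x ^ 3) +
        Algebra.trace (ZMod 2) L (x ^ (2 ^ k + 1)) +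
        Algebra.trace (ZMod 2) L (x ^ (3 * 2 ^ k + 1)) := by
  have := charP_of_injective_algebraMap (algebraMap (ZMod 2) L).injective 2
  set U : L := x ^ 2 ^ (k + 2) with hU
  have hfrob (n : ℕ) : (x + 1) ^ 2 ^ n = x ^ 2 ^ n + 1 := by rw [add_pow_char_pow, one_pow]
  have hU4 : (x ^ (2 ^ k + 1)) ^ 2 ^ 2 = U * x ^ 4 := by rw [hU]; ring
  have hU12 : (x ^ (3 * 2 ^ k + 1)) ^ 2 ^ 2 = U ^ 3 * x ^ 4 := by rw [hU]; ring
  have hU3 : (x ^ 3) ^ 2 ^ (k + 2) = U ^ 3 := pow_right_comm x 3 _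
  have hexp : (x + 1) ^ (3 * 2 ^ (k + 2) + 4) + (x + 1) ^ (2 ^ (k + 2) + 2) +
      (x + 1) ^ 2 ^ (k + 2) =
        1 + (x ^ 3) ^ 2 ^ (k + 2) + (x ^ (2 ^ k + 1)) ^ 2 ^ 2 + (x ^ (3 * 2 ^ k + 1)) ^ 2 ^ 2 +
          ((U * x ^ 2) ^ 2 ^ 1 + U * x ^ 2) + ((x ^ 2) ^ 2 ^ 1 + x ^ 2) + (U ^ 2 ^ 1 + U) := by
    rw [pow_add _ (3 * _), pow_add _ (2 ^ (k + 2)), mul_comm 3 (2 ^ (k + 2)), pow_mul, hfrob,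
      ← hU, hU4, hU12, hU3, show (x + 1) ^ 4 = x ^ 4 + 1 from hfrob 2,
      show (x + 1) ^ 2 = x ^ 2 + 1 from hfrob 1]
    linear_combination
      (U ^ 2 * x ^ 4 + U * x ^ 4 + U ^ 2 + 2 * U + 1) * (CharTwo.two_eq_zero : (2 : L) = 0)
  have hpair (z : L) : Algebra.trace (ZMod 2) L (z ^ 2 ^ 1 + z) = 0 := by
    rw [map_add, trace_pow_two_pow, CharTwo.add_self_eq_zero]
  rw [hexp, map_add, map_add, map_add, hpair, hpair, hpair, add_zero, add_zero, add_zero]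
  simp only [map_add, trace_pow_two_pow]

end TraceExpansion

section GeneratorPolynomial

variable {m : ℕ} {α : GaloisField 2 m} {f : GaloisField 2 m → GaloisField 2 m}
  {ι : Type*} [Fintype ι] {β : ι → GaloisField 2 m}

lemma aeval_traceSeqPoly (hm : Odd m) (hβ : ∀ i, β i ≠ 0)
    (hf : ∀ t, Algebra.trace (ZMod 2) (GaloisField 2 m) (f (α ^ t + 1)) =
      ∑ i, Algebra.trace (ZMod 2) (GaloisField 2 m) ((β i)⁻¹ ^ t))
    {γ : GaloisField 2 m} (hγ : γ ≠ 0) :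
    aeval γ (traceSeqPoly m α f) = ∑ i, if IsConjRoot (ZMod 2) γ (β i) then 1 else 0 := by
  have hodd : Odd (Module.finrank (ZMod 2) (GaloisField 2 m)) := by
    rwa [GaloisField.finrank 2 hm.pos.ne']
  simp only [traceSeqPoly, hf, map_sum, map_mul, aeval_C, map_pow, aeval_X, Finset.sum_mul]
  rw [Finset.sum_comm, ← GaloisField.card 2 m hm.pos.ne']
  exact Finset.sum_congr rfl fun i _ ↦ by
    simpa only [map_pow] using sum_trace_inv_pow_mul_pow_eq_ite hodd (hβ i) hγ

lemma genPoly_eq_prod_minpoly (hm : Odd m) (hβ : ∀ i, β i ≠ 0)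
    (hconj : Pairwise fun i j ↦ ¬ IsConjRoot (ZMod 2) (β i) (β j))
    (hf : ∀ t, Algebra.trace (ZMod 2) (GaloisField 2 m) (f (α ^ t + 1)) =
      ∑ i, Algebra.trace (ZMod 2) (GaloisField 2 m) ((β i)⁻¹ ^ t)) :
    genPoly m α f = ∏ i, minpoly (ZMod 2) (β i) := by
  have hcard : Nat.card (GaloisField 2 m) = 2 ^ m := GaloisField.card 2 m hm.pos.ne'
  have hpos : 0 < 2 ^ m - 1 := Nat.sub_pos_of_lt (Nat.one_lt_two_pow hm.pos.ne')
  have hmonic : (∏ i, minpoly (ZMod 2) (β i)).Monic :=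
    monic_prod_of_monic _ _ fun i _ ↦ minpoly.monic (Algebra.IsIntegral.isIntegral _)
  have hvalue (i : ι) : aeval (β i) (traceSeqPoly m α f) ≠ 0 := by
    rw [aeval_traceSeqPoly hm hβ hf (hβ i), Finset.sum_eq_single_of_mem i (Finset.mem_univ i)
      fun j _ hj ↦ if_neg (hconj hj.symm), if_pos IsConjRoot.refl]
    exact one_ne_zero
  have hassoc : Associated (genPoly m α f) (∏ i, minpoly (ZMod 2) (β i)) := by
    refine associated_div_gcd (X_pow_sub_C_ne_zero hpos 1) (hcard ▸
      prod_minpoly_dvd_X_pow_card_sub_one hβ hconj) (isCoprime_prod_minpoly hvalue) (hcard ▸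
      X_pow_card_sub_one_dvd fun γ hγ ↦ ?_)
    rw [map_mul, mul_eq_zero, or_iff_not_imp_right, aeval_traceSeqPoly hm hβ hf hγ]
    intro hsum
    obtain ⟨i, -, hi⟩ := Finset.exists_ne_zero_of_sum_ne_zero hsum
    have hroot : aeval γ (minpoly (ZMod 2) (β i)) = 0 :=
      ((isConjRoot_iff_aeval_eq_zero (Algebra.IsIntegral.isIntegral _)).1
        (ite_ne_right_iff.1 hi).1.symm)
    rw [map_prod]
    exact Finset.prod_eq_zero (Finset.mem_univ i) hroot
  exact eq_of_monic_of_associated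
    (monic_of_ne_zero (hassoc.ne_zero_iff.2 hmonic.ne_zero)) hmonic hassoc

end GeneratorPolynomial

section LeaderSupport

open scoped Pointwise

/-- The positions of the binary digits `1` of the four exponents `0`, `3`, `2 ^ (h - 1) + 1` and
`2 ^ h + 2 ^ (h - 1) + 1` of the theorem, as residues modulo `m`. -/
def leaderSupport (m h : ℕ) : Fin 4 → Finset (ZMod m) :=
  ![∅, {0, 1}, {0, (h : ZMod m) - 1}, {0, (h : ZMod m) - 1, (h : ZMod m)}]

variable {m h : ℕ}

lemma one_two_three_five_ne_zero (hm7 : 7 ≤ m) :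
    (1 : ZMod m) ≠ 0 ∧ (2 : ZMod m) ≠ 0 ∧ (3 : ZMod m) ≠ 0 ∧ (5 : ZMod m) ≠ 0 := by
  have hne {c : ℕ} (hc : 0 < c) (hcm : c < m) : (c : ZMod m) ≠ 0 := by
    rw [Ne, ZMod.natCast_eq_zero_iff]
    exact Nat.not_dvd_of_pos_of_lt hc hcm
  exact_mod_cast And.intro (hne (c := 1) (by omega) (by omega)) <|
    And.intro (hne (c := 2) (by omega) (by omega)) <|
    And.intro (hne (c := 3) (by omega) (by omega)) (hne (c := 5) (by omega) (by omega))

lemma two_mul_natCast_eq_neg_one (hm : m = 2 * h + 1) : (2 : ZMod m) * h = -1 := by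
  have hself : ((2 * h + 1 : ℕ) : ZMod m) = 0 := hm ▸ ZMod.natCast_self m
  push_cast at hself
  exact eq_neg_of_add_eq_zero_left hself

lemma card_leaderSupport (hm : m = 2 * h + 1) (hm7 : 7 ≤ m) (p : Fin 4) :
    (leaderSupport m h p).card = ![0, 2, 2, 3] p := by
  obtain ⟨h1, -, h3, -⟩ := one_two_three_five_ne_zero hm7
  have hh := two_mul_natCast_eq_neg_one hm
  fin_cases p
  · rfl
  · exact Finset.card_pair h1.symm
  · exact Finset.card_pair (by grind)
  · exact Finset.card_eq_three.2 ⟨_, _, _, by grind, by grind, by grind, rfl⟩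

lemma leaderSupport_ne_univ [NeZero m] (hm : m = 2 * h + 1) (hm7 : 7 ≤ m) (p : Fin 4) :
    leaderSupport m h p ≠ Finset.univ := by
  intro huniv
  have hcard := card_leaderSupport hm hm7 p
  rw [huniv, Finset.card_univ, ZMod.card] at hcard
  have hle : ![0, 2, 2, 3] p ≤ 3 := by fin_cases p <;> decide
  omega

lemma eq_of_vadd_leaderSupport_eq (hm : m = 2 * h + 1) (hm7 : 7 ≤ m) {i : ZMod m} {p q : Fin 4}
    (hpq : i +ᵥ leaderSupport m h p = leaderSupport m h q) : p = q := by
  obtain ⟨h1, -, h3, h5⟩ := one_two_three_five_ne_zero hm7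
  have hh := two_mul_natCast_eq_neg_one hm
  have hcard := congrArg Finset.card hpq
  rw [Finset.card_vadd_finset, card_leaderSupport hm hm7, card_leaderSupport hm hm7] at hcard
  have hmem : ∀ x ∈ leaderSupport m h p, i + x ∈ leaderSupport m h q :=
    fun x hx ↦ hpq ▸ Finset.vadd_mem_vadd_finset hx
  fin_cases p <;> fin_cases q <;>
    try first | rfl | exact absurd hcard (by decide)
  all_goals
    simp only [leaderSupport, Fin.isValue, Fin.mk_one, Fin.reduceFinMk, Matrix.cons_val,
      Matrix.cons_val_zero, Matrix.cons_val_one, Finset.mem_insert, Finset.mem_singleton,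
      forall_eq_or_imp, forall_eq, add_zero] at hmem
    grind

lemma eq_zero_of_vadd_leaderSupport_eq (hm : m = 2 * h + 1) (hm7 : 7 ≤ m) {i : ZMod m} {p : Fin 4}
    (hp : p ≠ 0) (hi : i +ᵥ leaderSupport m h p = leaderSupport m h p) : i = 0 := by
  obtain ⟨h1, h2, h3, -⟩ := one_two_three_five_ne_zero hm7
  have hh := two_mul_natCast_eq_neg_one hm
  have hmem : ∀ x ∈ leaderSupport m h p, i + x ∈ leaderSupport m h p :=
    fun x hx ↦ (congrArg (i + x ∈ ·) hi).mp (Finset.vadd_mem_vadd_finset hx)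
  fin_cases p
  · exact absurd rfl hp
  all_goals
    simp only [leaderSupport, Fin.isValue, Fin.mk_one, Fin.reduceFinMk, Matrix.cons_val,
      Matrix.cons_val_zero, Matrix.cons_val_one, Finset.mem_insert, Finset.mem_singleton,
      forall_eq_or_imp, forall_eq, add_zero] at hmem
    grind

lemma binExp_leaderSupport [NeZero m] (hm : m = 2 * h + 1) (hm7 : 7 ≤ m) (p : Fin 4) :
    binExp (leaderSupport m h p) = ![0, 3, 2 ^ (h - 1) + 1, 2 ^ h + 2 ^ (h - 1) + 1] p := by
  have hval {c : ℕ} (hc : c < m) : (c : ZMod m).val = c := ZMod.val_cast_of_lt hc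
  have hval1 : (1 : ZMod m).val = 1 := mod_cast hval (c := 1) (by omega)
  have hvalsub : ((h : ZMod m) - 1).val = h - 1 := by
    rw [← Nat.cast_pred (by omega), hval (by omega)]
  have hh := two_mul_natCast_eq_neg_one hm
  obtain ⟨h1, -, h3, -⟩ := one_two_three_five_ne_zero hm7
  have hval0 : (0 : ZMod m).val = 0 := ZMod.val_zero
  unfold binExp
  fin_cases p
  · rfl
  · refine (Finset.sum_pair h1.symm).trans ?_
    rw [hval0, hval1]
    rfl
  · refine (Finset.sum_pair (by grind)).trans ?_
    rw [hval0, hvalsub]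
    exact add_comm _ _
  · refine (Finset.sum_insert (by grind)).trans ?_
    rw [Finset.sum_pair (by grind), hval0, hvalsub, hval (by omega)]
    change 2 ^ 0 + (2 ^ (h - 1) + 2 ^ h) = 2 ^ h + 2 ^ (h - 1) + 1
    ring

end LeaderSupport

section PolynomialCode

variable {K : Type*} [Field K] {g : K[X]}

/-- The code of length `v` generated by `g`, with words written as polynomials of degree `< v`.
It is cyclic when `g ∣ X ^ v - 1`; `codeC m α f` is the case `v = 2 ^ m - 1` and
`g = genPoly m α f`. -/
noncomputable def polynomialCode (g : K[X]) (v : ℕ) : Submodule K K[X] :=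
  degreeLT K v ⊓ (Ideal.span {g}).restrictScalars K

lemma mem_polynomialCode {v : ℕ} {c : K[X]} : c ∈ polynomialCode g v ↔ c.degree < v ∧ g ∣ c := by
  rw [polynomialCode, Submodule.mem_inf, mem_degreeLT, Submodule.restrictScalars_mem,
    Ideal.mem_span_singleton]

lemma map_mulLeft_degreeLT (hg : g ≠ 0) (v : ℕ) :
    (degreeLT K (v - g.natDegree)).map (LinearMap.mulLeft K g) = polynomialCode g v := by
  have hdeg {q : K[X]} (hq : q ≠ 0) : (g * q).degree < v ↔ q.degree < (v - g.natDegree : ℕ) := by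
    rw [← natDegree_lt_iff_degree_lt (mul_ne_zero hg hq), ← natDegree_lt_iff_degree_lt hq,
      natDegree_mul hg hq]
    omega
  ext c
  simp only [Submodule.mem_map, LinearMap.mulLeft_apply, mem_polynomialCode,
    mem_degreeLT]
  constructor
  · rintro ⟨q, hq, rfl⟩
    refine ⟨?_, dvd_mul_right g q⟩
    rcases eq_or_ne q 0 with rfl | hq0
    · rw [mul_zero, degree_zero]
      exact WithBot.bot_lt_coe v
    · exact (hdeg hq0).2 hq
  · rintro ⟨hc, q, rfl⟩
    refine ⟨q, ?_, rfl⟩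
    rcases eq_or_ne q 0 with rfl | hq0
    · rw [degree_zero]
      exact WithBot.bot_lt_coe _
    · exact (hdeg hq0).1 hc

lemma finrank_polynomialCode (hg : g ≠ 0) (v : ℕ) :
    Module.finrank K (polynomialCode g v) = v - g.natDegree := by
  have hinj : Function.Injective (LinearMap.mulLeft K g) := mul_right_injective₀ hg
  rw [← map_mulLeft_degreeLT hg, ← (Submodule.equivMapOfInjective _ hinj _).finrank_eq,
    (degreeLTEquiv K _).finrank_eq, Module.finrank_fin_fun]

lemma exists_mem_polynomialCode_card_support_le [Finite K] (hg : g ≠ 0) {v t : ℕ}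
    (h : Nat.card K ^ g.natDegree < v.choose t) :
    ∃ c ∈ polynomialCode g v, c ≠ 0 ∧ c.support.card ≤ 2 * t := by
  -- Pigeonhole: two of the `v.choose t` indicator polynomials of weight `t` agree modulo `g`.
  let indicator (A : Finset ℕ) : K[X] := ∑ i ∈ A, X ^ i
  have hcoeff (A : Finset ℕ) (i : ℕ) : (indicator A).coeff i = if i ∈ A then 1 else 0 := by
    simp [indicator, coeff_X_pow]
  have hinj : Function.Injective indicator := fun A B hAB ↦ by
    ext i
    have hi := congrArg (coeff · i) hAB
    simp only [hcoeff] at hi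
    by_cases hiA : i ∈ A <;> by_cases hiB : i ∈ B <;> simp_all
  have := Module.Finite.of_basis (AdjoinRoot.powerBasis hg).basis
  have : Finite (AdjoinRoot g) := Module.finite_of_finite K
  have := Fintype.ofFinite (AdjoinRoot g)
  have hcard : Fintype.card (AdjoinRoot g) < (Finset.powersetCard t (Finset.range v)).card := by
    rwa [Finset.card_powersetCard, Finset.card_range, ← Nat.card_eq_fintype_card,
      Module.natCard_eq_pow_finrank (K := K), (AdjoinRoot.powerBasis hg).finrank,
      AdjoinRoot.powerBasis_dim]
  obtain ⟨A, hA, B, hB, hAB, hmk⟩ := Finset.exists_ne_map_eq_of_card_lt_of_maps_to hcard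
    (f := fun A ↦ AdjoinRoot.mk g (indicator A)) fun _ _ ↦ Finset.mem_univ _
  obtain ⟨hAv, hAt⟩ := Finset.mem_powersetCard.1 hA
  obtain ⟨hBv, hBt⟩ := Finset.mem_powersetCard.1 hB
  have hzero {i : ℕ} (hi : i ∉ A ∪ B) : (indicator A - indicator B).coeff i = 0 := by
    rw [Finset.notMem_union] at hi
    rw [coeff_sub, hcoeff, hcoeff, if_neg hi.1, if_neg hi.2, sub_zero]
  refine ⟨indicator A - indicator B, mem_polynomialCode.2 ⟨?_,
    AdjoinRoot.mk_eq_mk.1 hmk⟩, sub_ne_zero.2 (hinj.ne hAB), ?_⟩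
  · refine (degree_lt_iff_coeff_zero _ _).2 fun i hi ↦ hzero fun hiAB ↦ ?_
    exact hi.not_gt (Finset.mem_range.1 (Finset.union_subset hAv hBv hiAB))
  · calc (indicator A - indicator B).support.card ≤ (A ∪ B).card :=
          Finset.card_le_card fun i hi ↦ not_imp_comm.1 hzero (mem_support_iff.1 hi)
      _ ≤ A.card + B.card := Finset.card_union_le A B
      _ = 2 * t := by rw [hAt, hBt, two_mul]

lemma even_card_support_of_X_sub_one_dvd {c : (ZMod 2)[X]} (hc : X - 1 ∣ c) :
    Even c.support.card := by
  have hcoeff {i : ℕ} (hi : i ∈ c.support) : c.coeff i = 1 := by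
    rw [mem_support_iff] at hi
    exact Fin.eq_one_of_ne_zero _ hi
  have heval : c.eval 1 = c.support.card := by
    simp only [eval_eq_sum, sum_def, one_pow, mul_one]
    rw [Finset.sum_congr rfl fun i ↦ hcoeff, Finset.sum_const, nsmul_one]
  have hroot : c.eval 1 = 0 := dvd_iff_isRoot.1 (by rwa [C_1])
  rwa [heval, ZMod.natCast_eq_zero_iff_even] at hroot

lemma card_support_ne_two {R : Type*} [Ring R] [Nontrivial R] [Algebra (ZMod 2) R] {β : R}
    {c : (ZMod 2)[X]} (hroot : aeval β c = 0) (hdeg : c.degree < orderOf β) :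
    c.support.card ≠ 2 := by
  intro hcard
  obtain ⟨i, j, hij, x, y, hx, hy, rfl⟩ := card_support_eq_two.1 hcard
  obtain rfl : x = 1 := Fin.eq_one_of_ne_zero x hx
  obtain rfl : y = 1 := Fin.eq_one_of_ne_zero y hy
  have hpow : β ^ i = β ^ j := by
    have := charP_of_injective_algebraMap (algebraMap (ZMod 2) R).injective 2
    simpa [CharTwo.add_eq_zero] using hroot
  have hj : j < orderOf β := by
    have hcoeff : (C 1 * X ^ i + C 1 * X ^ j : (ZMod 2)[X]).coeff j ≠ 0 := by
      simp [coeff_X_pow, hij.ne']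
    exact WithBot.coe_lt_coe.1 ((le_degree_of_ne_zero hcoeff).trans_lt hdeg)
  exact hij.ne (pow_injOn_Iio_orderOf (hij.trans hj) hj hpow)

lemma four_le_card_support_of_mem_polynomialCode {R : Type*} [Ring R] [Nontrivial R]
    [Algebra (ZMod 2) R] {β : R} {g c : (ZMod 2)[X]} (hX : X - 1 ∣ g) (hroot : aeval β g = 0)
    (hc : c ∈ polynomialCode g (orderOf β)) (hc0 : c ≠ 0) : 4 ≤ c.support.card := by
  obtain ⟨hdeg, hdvd⟩ := mem_polynomialCode.1 hc
  have hne_zero : c.support.card ≠ 0 := (Finset.card_pos.2 (nonempty_support_iff.2 hc0)).ne'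
  have hne_two : c.support.card ≠ 2 :=
    card_support_ne_two (aeval_eq_zero_of_dvd_aeval_eq_zero hdvd hroot) hdeg
  obtain ⟨k, hk⟩ := even_card_support_of_X_sub_one_dvd (hX.trans hdvd)
  omega

lemma exists_isLeast_wtSet {Cs : Submodule (ZMod 2) (ZMod 2)[X]} {a b : ℕ}
    (hlower : ∀ c ∈ Cs, c ≠ 0 → a ≤ c.support.card)
    (hupper : ∃ c ∈ Cs, c ≠ 0 ∧ c.support.card ≤ b) :
    ∃ d, IsLeast (wtSet Cs) d ∧ a ≤ d ∧ d ≤ b := by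
  obtain ⟨c, hc, hc0, hcb⟩ := hupper
  have hmem : c.support.card ∈ wtSet Cs := ⟨c, hc, hc0, rfl⟩
  have hleast : IsLeast (wtSet Cs) (sInf (wtSet Cs)) :=
    ⟨Nat.sInf_mem ⟨_, hmem⟩, fun _ hw ↦ Nat.sInf_le hw⟩
  obtain ⟨c', hc', hc'0, hmin⟩ := hleast.1
  exact ⟨_, hleast, hmin ▸ hlower c' hc' hc'0, (hleast.2 hmem).trans hcb⟩

end PolynomialCode

section Sequence

variable {m h : ℕ} {α : GaloisField 2 m} {f : GaloisField 2 m → GaloisField 2 m}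

lemma orderOf_inv₀ {G₀ : Type*} [GroupWithZero G₀] (x : G₀) : orderOf x⁻¹ = orderOf x :=
  orderOf_eq_orderOf_iff.2 fun n ↦ by rw [inv_pow, inv_eq_one]

lemma trace_sequence_eq_sum [NeZero m] (hm : m = 2 * h + 1) (hm7 : 7 ≤ m)
    (hf : ∀ x, f x = x ^ (3 * 2 ^ ((m + 1) / 2) + 4) + x ^ (2 ^ ((m + 1) / 2) + 2) +
      x ^ (2 ^ ((m + 1) / 2))) (t : ℕ) :
    Algebra.trace (ZMod 2) (GaloisField 2 m) (f (α ^ t + 1)) =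
      ∑ p, Algebra.trace (ZMod 2) (GaloisField 2 m)
        ((α⁻¹ ^ binExp (leaderSupport m h p))⁻¹ ^ t) := by
  obtain ⟨k, rfl⟩ : ∃ k, h = k + 1 := ⟨h - 1, by omega⟩
  have hexp : (m + 1) / 2 = k + 2 := by omega
  have hpow (e : ℕ) : (α⁻¹ ^ e)⁻¹ ^ t = (α ^ t) ^ e := by
    rw [← inv_pow, inv_inv, pow_right_comm]
  have hlast : 2 ^ (k + 1) + 2 ^ k + 1 = 3 * 2 ^ k + 1 := by ring
  simp only [hf, hexp, hpow, trace_add_one_pow_sum, Fin.sum_univ_four,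
    binExp_leaderSupport hm hm7]
  simp [hlast]

lemma genPoly_eq_prod_minpoly_leader [NeZero m] (hm : m = 2 * h + 1) (hm7 : 7 ≤ m)
    (hα : orderOf α = 2 ^ m - 1)
    (hf : ∀ x, f x = x ^ (3 * 2 ^ ((m + 1) / 2) + 4) + x ^ (2 ^ ((m + 1) / 2) + 2) +
      x ^ (2 ^ ((m + 1) / 2))) :
    genPoly m α f = ∏ p, minpoly (ZMod 2) (α⁻¹ ^ binExp (leaderSupport m h p)) := by
  have hω : orderOf α⁻¹ = 2 ^ m - 1 := (orderOf_inv₀ α).trans hα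
  have hpos : 0 < orderOf α⁻¹ := hω ▸ Nat.sub_pos_of_lt (Nat.one_lt_two_pow (NeZero.ne m))
  have hne : α⁻¹ ≠ 0 := fun h0 ↦ by simp [h0] at hpos
  refine genPoly_eq_prod_minpoly ⟨h, hm⟩ (fun p ↦ pow_ne_zero _ hne) (fun p q hpq hconj ↦ ?_)
    (trace_sequence_eq_sum hm hm7 hf)
  obtain ⟨i, hi⟩ := exists_vadd_eq_of_isConjRoot_pow_binExp
    (GaloisField.finrank 2 (NeZero.ne m)) hω (leaderSupport_ne_univ hm hm7 p)
    (leaderSupport_ne_univ hm hm7 q) hconj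
  exact hpq (eq_of_vadd_leaderSupport_eq hm hm7 hi)

lemma natDegree_prod_minpoly_leader [NeZero m] (hm : m = 2 * h + 1) (hm7 : 7 ≤ m)
    (hα : orderOf α = 2 ^ m - 1) :
    (∏ p, minpoly (ZMod 2) (α⁻¹ ^ binExp (leaderSupport m h p))).natDegree = 3 * m + 1 := by
  have hω : orderOf α⁻¹ = 2 ^ m - 1 := (orderOf_inv₀ α).trans hα
  have hzero : (minpoly (ZMod 2) (α⁻¹ ^ binExp (leaderSupport m h 0))).natDegree = 1 := by
    rw [binExp_leaderSupport hm hm7, Matrix.cons_val_zero, pow_zero, minpoly.one,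
      ← C_1, natDegree_X_sub_C]
  have hne {p : Fin 4} (hp : p ≠ 0) :
      (minpoly (ZMod 2) (α⁻¹ ^ binExp (leaderSupport m h p))).natDegree = m :=
    natDegree_minpoly_pow_binExp (GaloisField.finrank 2 (NeZero.ne m)) hω
      (leaderSupport_ne_univ hm hm7 p) fun _ ↦ eq_zero_of_vadd_leaderSupport_eq hm hm7 hp
  rw [natDegree_prod_of_monic _ _ fun p _ ↦ minpoly.monic (Algebra.IsIntegral.isIntegral _),
    Fin.sum_univ_four, hzero, hne (by decide), hne (by decide), hne (by decide)]
  ring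

lemma prod_minpoly_leader [NeZero m] (hm : m = 2 * h + 1) (hm7 : 7 ≤ m) :
    ∏ p, minpoly (ZMod 2) (α⁻¹ ^ binExp (leaderSupport m h p)) =
      (X - 1) * minpoly (ZMod 2) (α⁻¹ ^ 3) * minpoly (ZMod 2) (α⁻¹ ^ (2 ^ (h - 1) + 1)) *
        minpoly (ZMod 2) (α⁻¹ ^ (2 ^ h + 2 ^ (h - 1) + 1)) := by
  rw [Fin.prod_univ_four]
  simp [binExp_leaderSupport hm hm7, minpoly.one]

end Sequence

/-- Theorem 2: for f₂(x) = x^{3·2^{(m+1)/2}+4} + x^{2^{(m+1)/2}+2} + x^{2^{(m+1)/2}}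
over 𝔽_{2^m}, m = 2h+1 ≥ 7, the minimal polynomial of the sequence
s_t = Tr(f₂(α^t+1)) is (x−1)·m_{α^{−3}}(x)·m_{α^{−(2^{h−1}+1)}}(x)·m_{α^{−(2^h+2^{h−1}+1)}}(x)
of degree 3m+1; the code C_s has length 2^m−1, dimension 2^m−2−3m, and
minimum distance d with 4 ≤ d ≤ 8. -/
theorem stmt3 (m h : ℕ) (hm : m = 2 * h + 1) (hm7 : 7 ≤ m)
    (α : GaloisField 2 m) (hα : orderOf α = 2 ^ m - 1)
    (f : GaloisField 2 m → GaloisField 2 m)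
    (hf : ∀ x, f x = x ^ (3 * 2 ^ ((m + 1) / 2) + 4) +
        x ^ (2 ^ ((m + 1) / 2) + 2) + x ^ (2 ^ ((m + 1) / 2))) :
    genPoly m α f =
      (X - 1) * minpoly (ZMod 2) (α⁻¹ ^ 3) *
        minpoly (ZMod 2) (α⁻¹ ^ (2 ^ (h - 1) + 1)) *
        minpoly (ZMod 2) (α⁻¹ ^ (2 ^ h + 2 ^ (h - 1) + 1)) ∧
    (genPoly m α f).natDegree = 3 * m + 1 ∧
    Module.finrank (ZMod 2) ↥(codeC m α f) = 2 ^ m - 2 - 3 * m ∧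
    (∃ d : ℕ, IsLeast (wtSet (codeC m α f)) d ∧ 4 ≤ d ∧ d ≤ 8) := by
  have : NeZero m := ⟨by omega⟩
  have hgen := genPoly_eq_prod_minpoly_leader hm hm7 hα hf
  have hdeg := hgen ▸ natDegree_prod_minpoly_leader hm hm7 hα
  rw [prod_minpoly_leader hm hm7] at hgen
  have hg : genPoly m α f ≠ 0 := ne_zero_of_natDegree_gt (n := 0) (by omega)
  have hX : X - 1 ∣ genPoly m α f := hgen ▸ ((dvd_mul_right _ _).mul_right _).mul_right _
  have hroot : aeval (α⁻¹ ^ 3) (genPoly m α f) = 0 := by simp [hgen]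
  have horder : orderOf (α⁻¹ ^ 3) = 2 ^ m - 1 := by
    have hinv : orderOf α⁻¹ = 2 ^ m - 1 := (orderOf_inv₀ α).trans hα
    rw [Nat.Coprime.orderOf_pow (hinv ▸ coprime_two_pow_sub_one_three ⟨h, hm⟩), hinv]
  have hcode : codeC m α f = polynomialCode (genPoly m α f) (2 ^ m - 1) := rfl
  refine ⟨hgen, hdeg, ?_, exists_isLeast_wtSet (fun c hc ↦ ?_) ?_⟩
  · rw [hcode, finrank_polynomialCode hg, hdeg]
    omega
  · exact four_le_card_support_of_mem_polynomialCode hX hroot (horder ▸ hc)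
  · refine exists_mem_polynomialCode_card_support_le hg (t := 4) ?_
    rw [hdeg, Nat.card_zmod]
    exact two_pow_three_mul_add_one_lt_choose hm7
end

section
/- Let m = 2h + 1 ≥ 5 be odd and let f₃(x) = x + x^3 + x^{2^{(m+1)/2} + 1}. For the binary sequence s_t = Tr(f₃(α^t + 1)), the minimal polynomial of the sequence is g_s(x) = (x − 1)·m_{α^{−1}}(x)·m_{α^{−3}}(x)·m_{α^{−(2^h+1)}}(x), which has degree 3m + 1; consequently the binary cyclic code C_s has length 2^m − 1 and 𝔽₂-dimension 2^m − 2 − 3m, and its minimum distance is exactly 8 (every nonzero codeword has Hamming weight at least 8, and some codeword has Hamming weight exactly 8). -/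
open Polynomial
open scoped Classical

/-!
The trace identity `Tr (f (x + 1)) = 1 + Tr (x ^ 2) + Tr (x ^ 3) + Tr (x ^ (2 ^ h + 1))` writes
the sequence as a sum of `t`-th powers of distinct elements, namely `1` and the conjugates of
`α`, `α ^ 3` and `α ^ (2 ^ h + 1)`; the roots of the minimal polynomial are the inverses of
these elements.

So the set `A` of locators of a codeword has even size and
`∑ x = ∑ x ^ 3 = ∑ x ^ (2 ^ h + 1) = 0`. With `σ x = x ^ 2 ^ h`, for which `σ (σ x) ^ 2 = x`,
these equations say that the functions `1, x, σ x, σ (σ x)` on `A` are pairwise orthogonal, and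
orthogonal to themselves. If the first `d + 2` of them are independent, then
`2 * (d + 2) ≤ #A`. A nontrivial equation `∑ i ≤ d, a i * σ^[i] x = e` has at most `2 ^ d`
solutions, as `σ` only fixes `0` and `1`, so they are independent as soon as `2 ^ d < #A`. This
drives `#A` up from `2` to `4`, `6` and `8`. Conversely an affine `3`-flat avoiding `0` is the
set of locators of a codeword of weight `8`.
-/

section FixedField

variable {F : Type*} [Field F] {σ : F →+* F} {K : Finset F}

theorem sum_mul_iterate_eq_sum_mul_iterate_sub (σ : F →+* F) {d : ℕ} {b : ℕ → F}
    (hb : ∑ i ∈ Finset.range (d + 2), b i = 0) (u : F) :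
    ∑ i ∈ Finset.range (d + 2), b i * σ^[i] u =
      ∑ i ∈ Finset.range (d + 1), (-∑ j ∈ Finset.range (i + 1), b j) * σ^[i] (σ u - u) := by
  have habel := Finset.sum_range_by_parts (fun i ↦ σ^[i] u) b (d + 2)
  simp only [smul_eq_mul, hb, mul_zero, zero_sub] at habel
  simp only [mul_comm (b _), habel, neg_mul, Finset.sum_neg_distrib, iterate_map_sub,
    ← Function.iterate_succ_apply, mul_comm (∑ j ∈ _, b j)]
  rfl

theorem eq_zero_of_forall_sum_range_eq_zero {M : Type*} [AddCommGroup M] {n : ℕ} {b : ℕ → M}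
    (hb : ∀ i < n, ∑ j ∈ Finset.range (i + 1), b j = 0) : ∀ i < n, b i = 0 := by
  rintro (_ | i) hi
  · simpa using hb 0 hi
  · simpa [Finset.sum_range_succ _ (i + 1), hb i (by omega)] using hb (i + 1) hi

theorem card_le_card_mul_card_image_map_sub (hK : ∀ x, σ x = x → x ∈ K) (S : Finset F) (x : F)
    {p : F} (hp : p ≠ 0) :
    S.card ≤ K.card * (S.image fun t ↦ σ ((t - x) / p) - (t - x) / p).card := by
  refine Finset.card_le_mul_card_image _ _ fun w hw ↦ ?_
  obtain ⟨s, -, rfl⟩ := Finset.mem_image.1 hw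
  refine Finset.card_le_card_of_injOn (fun t ↦ (t - x) / p - (s - x) / p) ?_ ?_
  · intro t ht
    have hts : σ ((t - x) / p) - (t - x) / p = σ ((s - x) / p) - (s - x) / p :=
      (Finset.mem_filter.1 ht).2
    exact hK _ (by rw [map_sub]; linear_combination hts)
  · intro t _ t' _ h
    simpa [hp] using h

/- A nonzero root `p` of the homogeneous equation gives the right factor `u ↦ σ u - u` after the
substitution `t = p * u + x`. -/
theorem card_le_card_pow_of_sum_mul_iterate_eq (hK : ∀ x, σ x = x → x ∈ K) {d : ℕ} {a : ℕ → F}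
    (ha : ∃ i < d + 1, a i ≠ 0) {e : F} {S : Finset F}
    (hS : ∀ t ∈ S, ∑ i ∈ Finset.range (d + 1), a i * σ^[i] t = e) : S.card ≤ K.card ^ d := by
  induction d generalizing a e S with
  | zero =>
    have ha0 : a 0 ≠ 0 := by simpa using ha
    refine Finset.card_le_one.2 fun x hx y hy ↦ mul_left_cancel₀ ha0 ?_
    simpa using (hS x hx).trans (hS y hy).symm
  | succ d ih =>
    have hK0 : 0 < K.card := Finset.card_pos.2 ⟨0, hK 0 (map_zero σ)⟩
    rcases le_or_gt S.card 1 with hS1 | hS1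
    · exact hS1.trans (Nat.one_le_pow _ _ hK0)
    obtain ⟨x, hx, y, hy, hxy⟩ := Finset.one_lt_card.1 hS1
    set p := y - x
    have hp : p ≠ 0 := sub_ne_zero.2 hxy.symm
    have hsub : ∀ t ∈ S, ∑ i ∈ Finset.range (d + 2), a i * σ^[i] (t - x) = 0 := fun t ht ↦ by
      simp only [iterate_map_sub, mul_sub, Finset.sum_sub_distrib, hS t ht, hS x hx, sub_self]
    let b : ℕ → F := fun i ↦ a i * σ^[i] p
    have hb : ∑ i ∈ Finset.range (d + 2), b i = 0 := hsub y hy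
    let φ : F → F := fun t ↦ σ ((t - x) / p) - (t - x) / p
    have himage : (S.image φ).card ≤ K.card ^ d := by
      refine ih (a := fun i ↦ -∑ j ∈ Finset.range (i + 1), b j) (e := 0) ?_ ?_
      · by_contra! hB
        have hb1 (i : ℕ) (hi : i < d + 2) : ∑ j ∈ Finset.range (i + 1), b j = 0 := by
          rcases Nat.lt_succ_iff_lt_or_eq.1 hi with hi | rfl
          · exact neg_eq_zero.1 (hB i hi)
          · exact hb
        obtain ⟨i, hi, hai⟩ := ha
        have hσp : σ^[i] p ≠ 0 := by
          simpa only [iterate_map_zero] using (σ.injective.iterate i).ne hp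
        exact mul_ne_zero hai hσp (eq_zero_of_forall_sum_range_eq_zero hb1 i hi)
      · intro w hw
        obtain ⟨t, ht, rfl⟩ := Finset.mem_image.1 hw
        rw [← sum_mul_iterate_eq_sum_mul_iterate_sub σ hb, ← hsub t ht]
        refine Finset.sum_congr rfl fun i _ ↦ ?_
        rw [mul_assoc, ← iterate_map_mul, mul_div_cancel₀ _ hp]
    calc S.card ≤ K.card * (S.image φ).card := card_le_card_mul_card_image_map_sub hK S x hp
      _ ≤ K.card * K.card ^ d := by gcongr
      _ = K.card ^ (d + 1) := (pow_succ' _ _).symm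

end FixedField

theorem two_mul_card_le_of_forall_dotProduct_eq_zero {K ι κ : Type*} [Field K] [Fintype ι]
    [Fintype κ] {r : κ → ι → K} (hr : LinearIndependent K r) (h : ∀ i j, r i ⬝ᵥ r j = 0) :
    2 * Fintype.card κ ≤ Fintype.card ι := by
  have hrank := LinearIndependent.rank_matrix (M := Matrix.of r) hr
  have hmul : Matrix.of r * (Matrix.of r).transpose = 0 := by
    ext i j
    exact h i j
  have hle := Matrix.rank_add_rank_le_card_of_mul_eq_zero hmul
  rw [Matrix.rank_transpose, hrank] at hle
  omega

section Moments

variable {F : Type*} [Field F] {σ : F →+* F} {K A : Finset F} {d : ℕ}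

/-- The functions `1, x, σ x, σ² x, …` on a field with an endomorphism `σ`. Evaluated at the
locators of a codeword they are rows of a parity-check matrix. -/
def iterateRow (σ : F →+* F) : ℕ → F → F
  | 0, _ => 1
  | i + 1, x => σ^[i] x

theorem linearIndependent_iterateRow (hK : ∀ x, σ x = x → x ∈ K) (hA : K.card ^ d < A.card) :
    LinearIndependent F fun (i : Fin (d + 2)) (x : A) ↦ iterateRow σ i x := by
  refine Fintype.linearIndependent_iff.2 fun g hg ↦ ?_
  obtain ⟨b, hb⟩ : ∃ b : ℕ → F, ∀ i : Fin (d + 2), g i = b i :=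
    ⟨Function.extend Fin.val g 0, fun i ↦ (Fin.val_injective.extend_apply g 0 i).symm⟩
  have hrel (x : F) (hx : x ∈ A) :
      ∑ i ∈ Finset.range (d + 1), b (i + 1) * σ^[i] x = -b 0 := by
    have hgx := congrFun hg ⟨x, hx⟩
    simp only [Finset.sum_apply, Pi.smul_apply, smul_eq_mul, hb, Pi.zero_apply,
      Fin.sum_univ_eq_sum_range fun i ↦ b i * iterateRow σ i x] at hgx
    rw [Finset.sum_range_succ'] at hgx
    simpa [iterateRow] using eq_neg_of_add_eq_zero_left hgx
  have hsucc : ∀ i < d + 1, b (i + 1) = 0 := by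
    by_contra! hne
    exact hA.not_ge (card_le_card_pow_of_sum_mul_iterate_eq hK hne hrel)
  have hzero : b 0 = 0 := by
    obtain ⟨x, hx⟩ := Finset.card_pos.1 (Nat.zero_lt_of_lt hA)
    rw [← neg_eq_zero, ← hrel x hx]
    exact Finset.sum_eq_zero fun i hi ↦ by rw [hsucc i (Finset.mem_range.1 hi), zero_mul]
  rintro ⟨_ | i, hi⟩
  · exact (hb _).trans hzero
  · exact (hb _).trans (hsucc i (by omega))

theorem sum_iterate_mul_iterate_eq_zero (h : ∀ k ≤ d, ∑ x ∈ A, x * σ^[k] x = 0) {i j : ℕ}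
    (hi : i ≤ d) (hj : j ≤ d) : ∑ x ∈ A, σ^[i] x * σ^[j] x = 0 := by
  wlog hij : i ≤ j generalizing i j
  · simpa only [mul_comm] using this hj hi (le_of_not_ge hij)
  obtain ⟨k, rfl⟩ := Nat.exists_eq_add_of_le hij
  have hk := congrArg σ^[i] (h k (by omega))
  simp only [← RingHom.coe_pow, map_sum, map_mul, map_zero] at hk
  simpa only [RingHom.coe_pow, Function.iterate_add_apply] using hk

theorem two_mul_add_two_le_card (hK : ∀ x, σ x = x → x ∈ K) (hA : K.card ^ d < A.card)
    (h0 : (A.card : F) = 0) (h1 : ∑ x ∈ A, x = 0) (h : ∀ k ≤ d, ∑ x ∈ A, x * σ^[k] x = 0) :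
    2 * (d + 2) ≤ A.card := by
  have hsum : ∀ k, ∑ x ∈ A, σ^[k] x = 0 := fun k ↦ by
    simpa only [← RingHom.coe_pow, map_sum, map_zero] using congrArg σ^[k] h1
  have horth (i j : Fin (d + 2)) : ∑ x ∈ A, iterateRow σ i x * iterateRow σ j x = 0 := by
    rcases i with ⟨_ | i, hi⟩ <;> rcases j with ⟨_ | j, hj⟩
    · simpa [iterateRow] using h0
    · simpa [iterateRow] using hsum j
    · simpa [iterateRow] using hsum i
    · exact sum_iterate_mul_iterate_eq_zero h (by omega) (by omega)
  simpa using two_mul_card_le_of_forall_dotProduct_eq_zero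
    (linearIndependent_iterateRow hK hA) fun i j ↦
      (Finset.sum_coe_sort A fun x ↦ iterateRow σ i x * iterateRow σ j x).trans (horth i j)

theorem eight_le_card_of_sum_mul_eq_zero [CharP F 2] (hσ : ∀ x, σ (σ x) ^ 2 = x)
    (hA : A.Nonempty) (h0 : (A.card : F) = 0) (h2 : ∑ x ∈ A, x ^ 2 = 0)
    (h3 : ∑ x ∈ A, x ^ 3 = 0) (hAσ : ∑ x ∈ A, x * σ x = 0) : 8 ≤ A.card := by
  have hK : ∀ x, σ x = x → x ∈ ({0, 1} : Finset F) := fun x hx ↦ by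
    have hxx : x * x = x := by simpa only [hx, sq] using hσ x
    simpa using IsIdempotentElem.iff_eq_zero_or_one.1 hxx
  have hcard : ({0, 1} : Finset F).card = 2 := Finset.card_pair zero_ne_one
  have h1 : ∑ x ∈ A, x = 0 := by
    rwa [← CharTwo.sum_sq, sq_eq_zero_iff] at h2
  have hσσ : ∑ x ∈ A, x * σ (σ x) = 0 := by
    rw [← sq_eq_zero_iff, CharTwo.sum_sq, ← h3]
    exact Finset.sum_congr rfl fun x _ ↦ by rw [mul_pow, hσ, ← pow_succ]
  have hladder (d : ℕ) (hd : d ≤ 2) (hlt : 2 ^ d < A.card) : 2 * (d + 2) ≤ A.card := by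
    refine two_mul_add_two_le_card hK (hcard.symm ▸ hlt) h0 h1 fun k hk ↦ ?_
    have hk2 := hk.trans hd
    interval_cases k
    · simpa only [Function.iterate_zero, id, sq] using h2
    · exact hAσ
    · exact hσσ
  have htwo : 2 ≤ A.card :=
    Nat.le_of_dvd hA.card_pos ((CharP.cast_eq_zero_iff F 2 _).1 h0)
  have hfour := hladder 0 (by omega) (by omega)
  have hsix := hladder 1 (by omega) (by omega)
  exact hladder 2 le_rfl (by omega)

end Moments

section QuadraticExponents

theorem odd_two_pow_sub_one {m : ℕ} (hm : m ≠ 0) : Odd (2 ^ m - 1) :=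
  Nat.Even.sub_odd Nat.one_le_two_pow ((even_two_mul 1).pow_of_ne_zero hm) odd_one

theorem two_pow_add_two_pow_eq_iff {a b c d : ℕ} :
    2 ^ a + 2 ^ b = 2 ^ c + 2 ^ d ↔ a = c ∧ b = d ∨ a = d ∧ b = c := by
  refine ⟨fun h ↦ ?_, by rintro (⟨rfl, rfl⟩ | ⟨rfl, rfl⟩) <;> simp only [add_comm]⟩
  wlog hab : a ≤ b generalizing a b
  · have := this (add_comm (2 ^ a) _ ▸ h) (le_of_not_ge hab)
    tauto
  wlog hcd : c ≤ d generalizing c d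
  · have := this (add_comm (2 ^ c) _ ▸ h) (le_of_not_ge hcd)
    tauto
  have not_lt_of_sum_eq {a b c d : ℕ} (hab : a ≤ b) (h : 2 ^ a + 2 ^ b = 2 ^ c + 2 ^ d) :
      ¬b < d := fun hbd ↦ by
    have h1 : 2 ^ a ≤ 2 ^ b := Nat.pow_le_pow_right two_pos hab
    have h2 : 2 ^ (b + 1) ≤ 2 ^ d := Nat.pow_le_pow_right two_pos hbd
    have h3 : 0 < 2 ^ c := by positivity
    omega
  obtain rfl : b = d :=
    le_antisymm (not_lt.1 (not_lt_of_sum_eq hcd h.symm)) (not_lt.1 (not_lt_of_sum_eq hab h))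
  exact .inl ⟨Nat.pow_right_injective le_rfl (Nat.add_right_cancel h), rfl⟩

theorem exists_two_pow_add_one_mul_two_pow_modEq {m r i : ℕ} (hr : r < m) (hi : i < m) :
    ∃ c < m, (c = i + r ∨ c + m = i + r) ∧
      (2 ^ r + 1) * 2 ^ i ≡ 2 ^ i + 2 ^ c [MOD 2 ^ m - 1] := by
  have heq : (2 ^ r + 1) * 2 ^ i = 2 ^ i + 2 ^ (i + r) := by ring
  rw [heq]
  rcases lt_or_ge (i + r) m with hlt | hge
  · exact ⟨i + r, hlt, .inl rfl, rfl⟩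
  · obtain ⟨c, hc⟩ := Nat.exists_eq_add_of_le' hge
    refine ⟨c, by omega, .inr hc.symm, Nat.ModEq.add_left _ ?_⟩
    have hone : 2 ^ m ≡ 1 [MOD 2 ^ m - 1] :=
      ((Nat.modEq_iff_dvd' Nat.one_le_two_pow).2 dvd_rfl).symm
    simpa only [hc, pow_add, mul_one] using hone.mul_left (2 ^ c)

/- Modulo `2 ^ m - 1` the exponent `(2 ^ r + 1) * 2 ^ i` is a sum of two powers of two in the
window `[2, 2 ^ m]`, which has exactly `2 ^ m - 1` elements. -/
theorem eq_of_two_pow_add_one_mul_two_pow_modEq {m r s i j : ℕ} (hr : 2 * r < m) (hs : 2 * s < m)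
    (hi : i < m) (hj : j < m)
    (h : (2 ^ r + 1) * 2 ^ i ≡ (2 ^ s + 1) * 2 ^ j [MOD 2 ^ m - 1]) : r = s ∧ i = j := by
  obtain ⟨c, hc, hcr, hmodc⟩ :=
    exists_two_pow_add_one_mul_two_pow_modEq (by omega : r < m) hi
  obtain ⟨e, he, hes, hmode⟩ :=
    exists_two_pow_add_one_mul_two_pow_modEq (by omega : s < m) hj
  have hmod : 2 ^ i + 2 ^ c ≡ 2 ^ j + 2 ^ e [MOD 2 ^ m - 1] := hmodc.symm.trans (h.trans hmode)
  have window {a : ℕ} (ha : a < m) : 1 ≤ 2 ^ a ∧ 2 * 2 ^ a ≤ 2 ^ m :=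
    ⟨Nat.one_le_two_pow, pow_succ' 2 a ▸ Nat.pow_le_pow_right two_pos ha⟩
  have hsum : 2 ^ i + 2 ^ c = 2 ^ j + 2 ^ e := by
    have := window hi
    have := window hj
    have := window hc
    have := window he
    refine Nat.ModEq.eq_of_abs_lt hmod ?_
    rw [abs_lt]
    omega
  rcases two_pow_add_two_pow_eq_iff.1 hsum with ⟨rfl, rfl⟩ | ⟨rfl, rfl⟩ <;> omega

theorem pow_two_pow_add_one_mul_two_pow_ne_one {M : Type*} [CommMonoid M] {m r : ℕ} {x : M}
    (hx : IsPrimitiveRoot x (2 ^ m - 1)) (hr : r + 1 < m) (i : ℕ) :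
    x ^ ((2 ^ r + 1) * 2 ^ i) ≠ 1 := by
  intro h
  have hodd : Nat.Coprime (2 ^ m - 1) (2 ^ i) :=
    (Nat.coprime_two_right.2 (odd_two_pow_sub_one (by omega))).pow_right i
  have hdvd := Nat.le_of_dvd (by positivity) (hodd.dvd_of_dvd_mul_right (hx.dvd_of_pow_eq_one _ h))
  have hlt : 2 ^ r * 2 ^ 2 ≤ 2 ^ m := pow_add 2 r 2 ▸ Nat.pow_le_pow_right two_pos hr
  have hpos : 1 ≤ 2 ^ r := Nat.one_le_two_pow
  omega

/-- The powers `1` and `x ^ ((2 ^ r + 1) * 2 ^ i)` for `r ∈ R` and `i < m`: when `x` generates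
`𝔽_{2^m}ˣ`, these are `1` and the conjugates over `𝔽₂` of the `x ^ (2 ^ r + 1)`. The value `r = 0`
stands for the conjugacy class of `x` itself, in the guise of `x ^ 2`. -/
noncomputable def quadraticConjugates {M : Type*} [Monoid M] (m : ℕ) (R : Finset ℕ) (x : M) :
    Finset M :=
  insert 1 ((R ×ˢ Finset.range m).image fun p ↦ x ^ ((2 ^ p.1 + 1) * 2 ^ p.2))

theorem mem_quadraticConjugates {M : Type*} [Monoid M] {m : ℕ} {R : Finset ℕ} {x y : M} :
    y ∈ quadraticConjugates m R x ↔
      y = 1 ∨ ∃ r ∈ R, ∃ i < m, y = x ^ ((2 ^ r + 1) * 2 ^ i) := by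
  simp only [quadraticConjugates, Finset.mem_insert, Finset.mem_image, Finset.mem_product,
    Finset.mem_range, Prod.exists, and_assoc, exists_and_left, eq_comm]

section CommMonoid

variable {M : Type*} [CommMonoid M] {m : ℕ} {R : Finset ℕ} {x : M}

theorem injOn_pow_two_pow_add_one_mul_two_pow (hx : IsPrimitiveRoot x (2 ^ m - 1)) (hm : 2 ≤ m)
    (hR : ∀ r ∈ R, 2 * r < m) :
    Set.InjOn (fun p : ℕ × ℕ ↦ x ^ ((2 ^ p.1 + 1) * 2 ^ p.2)) ↑(R ×ˢ Finset.range m) := by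
  rintro ⟨r, i⟩ hri ⟨s, j⟩ hsj h
  simp only [Finset.coe_product, Set.mem_prod, Finset.mem_coe, Finset.mem_range] at hri hsj
  have hpos : 0 < 2 ^ m - 1 := Nat.sub_pos_of_lt (Nat.one_lt_two_pow (by omega))
  rw [(hx.isOfFinOrder hpos.ne').pow_eq_pow_iff_modEq, ← hx.eq_orderOf] at h
  obtain ⟨rfl, rfl⟩ := eq_of_two_pow_add_one_mul_two_pow_modEq (hR r hri.1) (hR s hsj.1)
    hri.2 hsj.2 h
  rfl

theorem one_notMem_image_pow_two_pow_add_one_mul_two_pow (hx : IsPrimitiveRoot x (2 ^ m - 1))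
    (hm : 2 ≤ m) (hR : ∀ r ∈ R, 2 * r < m) :
    1 ∉ (R ×ˢ Finset.range m).image fun p ↦ x ^ ((2 ^ p.1 + 1) * 2 ^ p.2) := by
  simp only [Finset.mem_image, Finset.mem_product, not_exists, not_and]
  rintro ⟨r, i⟩ ⟨hr, -⟩
  have := hR r hr
  exact pow_two_pow_add_one_mul_two_pow_ne_one hx (by omega) i

theorem card_quadraticConjugates (hx : IsPrimitiveRoot x (2 ^ m - 1)) (hm : 2 ≤ m)
    (hR : ∀ r ∈ R, 2 * r < m) : (quadraticConjugates m R x).card = R.card * m + 1 := by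
  rw [quadraticConjugates,
    Finset.card_insert_of_notMem (one_notMem_image_pow_two_pow_add_one_mul_two_pow hx hm hR),
    Finset.card_image_of_injOn (injOn_pow_two_pow_add_one_mul_two_pow hx hm hR),
    Finset.card_product, Finset.card_range]

theorem sum_quadraticConjugates {N : Type*} [AddCommMonoid N] (hx : IsPrimitiveRoot x (2 ^ m - 1))
    (hm : 2 ≤ m) (hR : ∀ r ∈ R, 2 * r < m) (g : M → N) :
    ∑ z ∈ quadraticConjugates m R x, g z =
      g 1 + ∑ r ∈ R, ∑ i ∈ Finset.range m, g (x ^ ((2 ^ r + 1) * 2 ^ i)) := by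
  rw [quadraticConjugates,
    Finset.sum_insert (one_notMem_image_pow_two_pow_add_one_mul_two_pow hx hm hR),
    Finset.sum_image (injOn_pow_two_pow_add_one_mul_two_pow hx hm hR), Finset.sum_product]

theorem pow_eq_one_of_mem_quadraticConjugates {v : ℕ} {z : M} (hx : x ^ v = 1)
    (hz : z ∈ quadraticConjugates m R x) : z ^ v = 1 := by
  rcases mem_quadraticConjugates.1 hz with rfl | ⟨r, -, i, -, rfl⟩
  · exact one_pow v
  · rw [pow_right_comm, hx, one_pow]

end CommMonoid

theorem inv_mem_quadraticConjugates_inv {M : Type*} [DivisionMonoid M] {m : ℕ} {R : Finset ℕ}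
    {x y : M} : y⁻¹ ∈ quadraticConjugates m R x⁻¹ ↔ y ∈ quadraticConjugates m R x := by
  simp only [mem_quadraticConjugates, inv_pow, inv_eq_one, inv_inj]

end QuadraticExponents

section Polynomials

variable {K L : Type*} [Field K] [Field L] [Algebra K L]

theorem aeval_div_gcd_eq_zero_iff [DecidableEq K[X]] {p q : K[X]} (hp : p.Separable) (x : L) :
    aeval x (p / EuclideanDomain.gcd p q) = 0 ↔ aeval x p = 0 ∧ aeval x q ≠ 0 := by
  set g := EuclideanDomain.gcd p q with hg
  have hgp : g ∣ p := EuclideanDomain.gcd_dvd_left p q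
  have hg0 : g ≠ 0 := ne_zero_of_dvd_ne_zero hp.ne_zero hgp
  have hmul : g * (p / g) = p := EuclideanDomain.mul_div_cancel' hg0 hgp
  have hpx : aeval x p = aeval x g * aeval x (p / g) := by rw [← map_mul, hmul]
  have hgx : aeval x g = 0 ↔ aeval x p = 0 ∧ aeval x q = 0 := by
    refine ⟨fun h ↦ ⟨aeval_eq_zero_of_dvd_aeval_eq_zero hgp h,
      aeval_eq_zero_of_dvd_aeval_eq_zero (EuclideanDomain.gcd_dvd_right p q) h⟩, fun h ↦ ?_⟩
    rw [hg, EuclideanDomain.gcd_eq_gcd_ab, map_add, map_mul, map_mul, h.1, h.2, zero_mul,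
      zero_mul, add_zero]
  have hcop : ¬(aeval x g = 0 ∧ aeval x (p / g) = 0) := fun h ↦ by
    obtain ⟨a, b, hab⟩ := Separable.isCoprime (hmul.symm ▸ hp)
    simpa [h.1, h.2] using congrArg (aeval x) hab
  have := mul_eq_zero (a := aeval x g) (b := aeval x (p / g))
  rw [← hpx] at this
  tauto

theorem dvd_of_forall_aeval_eq_zero {g q : K[X]} (hsep : g.Separable)
    (hsplit : (g.map (algebraMap K L)).Splits)
    (h : ∀ x : L, aeval x g = 0 → aeval x q = 0) : g ∣ q := by
  rcases eq_or_ne q 0 with rfl | hq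
  · exact dvd_zero g
  rw [← map_dvd_map' (algebraMap K L)]
  refine hsplit.dvd_of_roots_le_roots (Polynomial.map_ne_zero hsep.ne_zero)
    ((Multiset.le_iff_subset (nodup_roots hsep.map)).2 fun x hx ↦ ?_)
  rw [mem_roots_map hq]
  exact h x ((mem_roots_map hsep.ne_zero).1 hx)

theorem finrank_degreeLT_inf_span_singleton {g : K[X]} (hg : g ≠ 0) (n : ℕ) :
    Module.finrank K ↥(degreeLT K n ⊓ (Ideal.span {g}).restrictScalars K) = n - g.natDegree := by
  have hdeg (q : K[X]) : q.degree < ((n - g.natDegree : ℕ) : WithBot ℕ) ↔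
      (g * q).degree < (n : WithBot ℕ) := by
    rcases eq_or_ne q 0 with rfl | hq
    · simp
    · rw [degree_mul, degree_eq_natDegree hg, degree_eq_natDegree hq, ← Nat.cast_add,
        Nat.cast_lt, Nat.cast_lt]
      omega
  have hmap : (degreeLT K (n - g.natDegree)).map (LinearMap.mulLeft K g) =
      degreeLT K n ⊓ (Ideal.span {g}).restrictScalars K := by
    ext p
    simp only [Submodule.mem_map, Submodule.mem_inf, Submodule.restrictScalars_mem,
      Ideal.mem_span_singleton, LinearMap.mulLeft_apply, mem_degreeLT, hdeg]
    constructor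
    · rintro ⟨q, hq, rfl⟩
      exact ⟨hq, dvd_mul_right g q⟩
    · rintro ⟨hp, q, rfl⟩
      exact ⟨q, hp, rfl⟩
  have hinj : Function.Injective (LinearMap.mulLeft K g) := mul_right_injective₀ hg
  rw [← hmap, ← (Submodule.equivMapOfInjective _ hinj _).finrank_eq,
    (degreeLTEquiv K _).finrank_eq, Module.finrank_fin_fun]

theorem eq_one_of_ne_zero_zmod_two {a : ZMod 2} (ha : a ≠ 0) : a = 1 := by
  revert a
  decide

theorem monic_of_ne_zero_zmod_two {g : (ZMod 2)[X]} (hg : g ≠ 0) : g.Monic :=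
  eq_one_of_ne_zero_zmod_two (leadingCoeff_ne_zero.2 hg)

end Polynomials

section Frobenius

variable (K : Type*) {L : Type*} [Field K] [Fintype K] [Field L] [Algebra K L]

theorem frobeniusAlgEquivOfAlgebraic_pow_apply [Algebra.IsAlgebraic K L] (x : L) (i : ℕ) :
    (FiniteField.frobeniusAlgEquivOfAlgebraic K L ^ i) x = x ^ Fintype.card K ^ i := by
  rw [AlgEquiv.coe_pow, FiniteField.coe_frobeniusAlgEquivOfAlgebraic_iterate]

theorem minpoly_pow_card_pow [Algebra.IsAlgebraic K L] (x : L) (i : ℕ) :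
    minpoly K (x ^ Fintype.card K ^ i) = minpoly K x := by
  rw [← frobeniusAlgEquivOfAlgebraic_pow_apply, minpoly.algEquiv_eq]

theorem trace_pow_card_pow [Algebra.IsAlgebraic K L] (x : L) (i : ℕ) :
    Algebra.trace K L (x ^ Fintype.card K ^ i) = Algebra.trace K L x := by
  rw [← frobeniusAlgEquivOfAlgebraic_pow_apply, Algebra.trace_eq_of_algEquiv]

theorem aeval_pow_card_pow_eq_zero_iff [Algebra.IsAlgebraic K L] (x : L) (i : ℕ) (p : K[X]) :
    aeval (x ^ Fintype.card K ^ i) p = 0 ↔ aeval x p = 0 := by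
  rw [← minpoly.dvd_iff, minpoly_pow_card_pow, minpoly.dvd_iff]

end Frobenius

section Sequence

theorem sum_sum_pow_mul_pow {F : Type*} [Field F] {v : ℕ} {Z : Finset F} {β : F} (hβ0 : β ≠ 0)
    (hβ : β ^ v = 1) (hZ : ∀ z ∈ Z, z ^ v = 1) :
    ∑ t ∈ Finset.range v, (∑ z ∈ Z, z ^ t) * β ^ t = if β⁻¹ ∈ Z then (v : F) else 0 := by
  have hgeom : ∀ z ∈ Z, ∑ t ∈ Finset.range v, (z * β) ^ t = if z = β⁻¹ then (v : F) else 0 := by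
    intro z hz
    split_ifs with h
    · simp [h, hβ0]
    · have hne : z * β - 1 ≠ 0 := fun h1 ↦ h (eq_inv_of_mul_eq_one_left (sub_eq_zero.1 h1))
      refine (mul_eq_zero_iff_right hne).1 ?_
      rw [geom_sum_mul, mul_pow, hZ z hz, hβ, one_mul, sub_self]
  simp only [Finset.sum_mul, ← mul_pow]
  rw [Finset.sum_comm, Finset.sum_congr rfl hgeom, Finset.sum_ite_eq']

/-- The trace identity of a function `f` whose sequence `Tr (f (α ^ t + 1))` is, up to the constant
`1`, a sum of the quadratic trace sequences `Tr (α ^ (t * (2 ^ r + 1)))` with `r ∈ R`. -/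
def HasQuadraticTrace {m : ℕ} (R : Finset ℕ) (f : GaloisField 2 m → GaloisField 2 m) : Prop :=
  ∀ x, Algebra.trace (ZMod 2) (GaloisField 2 m) (f (x + 1)) =
    1 + ∑ r ∈ R, Algebra.trace (ZMod 2) (GaloisField 2 m) (x ^ (2 ^ r + 1))

variable {m : ℕ} {R : Finset ℕ} {α : GaloisField 2 m} {f : GaloisField 2 m → GaloisField 2 m}

theorem algebraMap_trace_eq_sum_quadraticConjugates (hα : IsPrimitiveRoot α (2 ^ m - 1))
    (hm : 2 ≤ m) (hR : ∀ r ∈ R, 2 * r < m) (hf : HasQuadraticTrace R f) (t : ℕ) :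
    algebraMap (ZMod 2) (GaloisField 2 m)
        (Algebra.trace (ZMod 2) (GaloisField 2 m) (f (α ^ t + 1))) =
      ∑ z ∈ quadraticConjugates m R α, z ^ t := by
  rw [hf, sum_quadraticConjugates hα hm hR, one_pow, map_add, map_one, map_sum]
  simp only [FiniteField.algebraMap_trace_eq_sum_pow, GaloisField.finrank 2 (by omega : m ≠ 0),
    Nat.card_zmod, ← pow_mul]
  simp only [mul_assoc, mul_comm t]

theorem aeval_traceSeqPoly_ne_zero_iff (hα : IsPrimitiveRoot α (2 ^ m - 1)) (hm : 2 ≤ m)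
    (hR : ∀ r ∈ R, 2 * r < m) (hf : HasQuadraticTrace R f) {β : GaloisField 2 m} (hβ0 : β ≠ 0)
    (hβ : β ^ (2 ^ m - 1) = 1) :
    aeval β (traceSeqPoly m α f) ≠ 0 ↔ β⁻¹ ∈ quadraticConjugates m R α := by
  have hv : ((2 ^ m - 1 : ℕ) : GaloisField 2 m) ≠ 0 :=
    (CharP.cast_eq_zero_iff (GaloisField 2 m) 2 _).not.2
      (odd_two_pow_sub_one (by omega)).not_two_dvd_nat
  simp only [traceSeqPoly, map_sum, map_mul, map_pow, aeval_C, aeval_X,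
    algebraMap_trace_eq_sum_quadraticConjugates hα hm hR hf]
  rw [sum_sum_pow_mul_pow hβ0 hβ fun z ↦ pow_eq_one_of_mem_quadraticConjugates hα.pow_eq_one]
  simp only [ne_eq, ite_eq_right_iff, hv, imp_false, not_not]

theorem separable_X_pow_two_pow_sub_one_sub_one (hm : m ≠ 0) :
    (X ^ (2 ^ m - 1) - 1 : (ZMod 2)[X]).Separable :=
  X_pow_sub_one_separable_iff.2 (ZMod.natCast_ne_zero_iff_odd.2 (odd_two_pow_sub_one hm))

theorem genPoly_dvd (α : GaloisField 2 m) (f : GaloisField 2 m → GaloisField 2 m) :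
    genPoly m α f ∣ X ^ (2 ^ m - 1) - 1 :=
  EuclideanDomain.div_dvd_of_dvd (EuclideanDomain.gcd_dvd_left _ _)

theorem separable_genPoly (hm : m ≠ 0) : (genPoly m α f).Separable :=
  (separable_X_pow_two_pow_sub_one_sub_one hm).of_dvd (genPoly_dvd α f)

theorem splits_genPoly (hα : IsPrimitiveRoot α (2 ^ m - 1)) (hm : m ≠ 0) :
    ((genPoly m α f).map (algebraMap (ZMod 2) (GaloisField 2 m))).Splits := by
  have hsplit : ((X ^ (2 ^ m - 1) - 1 : (ZMod 2)[X]).map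
      (algebraMap (ZMod 2) (GaloisField 2 m))).Splits := by
    simpa using X_pow_sub_one_splits hα
  exact hsplit.of_dvd
    (Polynomial.map_ne_zero (separable_X_pow_two_pow_sub_one_sub_one hm).ne_zero)
    (Polynomial.map_dvd _ (genPoly_dvd α f))

theorem aeval_genPoly_eq_zero_iff (hα : IsPrimitiveRoot α (2 ^ m - 1)) (hm : 2 ≤ m)
    (hR : ∀ r ∈ R, 2 * r < m) (hf : HasQuadraticTrace R f) {β : GaloisField 2 m} :
    aeval β (genPoly m α f) = 0 ↔ β ∈ quadraticConjugates m R α⁻¹ := by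
  have hv : 2 ^ m - 1 ≠ 0 := (odd_two_pow_sub_one (by omega)).pos.ne'
  rw [genPoly, aeval_div_gcd_eq_zero_iff (separable_X_pow_two_pow_sub_one_sub_one (by omega)),
    ← inv_mem_quadraticConjugates_inv, inv_inv, map_sub, map_pow, aeval_X, map_one, sub_eq_zero]
  constructor
  · rintro ⟨hβ, hS⟩
    exact (aeval_traceSeqPoly_ne_zero_iff hα hm hR hf (by rintro rfl; simp [hv] at hβ) hβ).1 hS
  · intro hmem
    have hβ : β ^ (2 ^ m - 1) = 1 := by
      simpa using pow_eq_one_of_mem_quadraticConjugates hα.pow_eq_one hmem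
    exact ⟨hβ, (aeval_traceSeqPoly_ne_zero_iff hα hm hR hf (by rintro rfl; simp [hv] at hβ) hβ).2
      hmem⟩

theorem genPoly_dvd_iff (hα : IsPrimitiveRoot α (2 ^ m - 1)) (hm : 2 ≤ m)
    (hR : ∀ r ∈ R, 2 * r < m) (hf : HasQuadraticTrace R f) {c : (ZMod 2)[X]} :
    genPoly m α f ∣ c ↔ aeval (1 : GaloisField 2 m) c = 0 ∧
      ∀ r ∈ R, aeval (α⁻¹ ^ (2 ^ r + 1)) c = 0 := by
  have hconj (r i : ℕ) : aeval (α⁻¹ ^ ((2 ^ r + 1) * 2 ^ i)) c = 0 ↔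
      aeval (α⁻¹ ^ (2 ^ r + 1)) c = 0 := by
    rw [pow_mul, ← aeval_pow_card_pow_eq_zero_iff (ZMod 2) (α⁻¹ ^ (2 ^ r + 1)) i, ZMod.card]
  refine ⟨fun hdvd ↦ ?_, fun ⟨h1, hr⟩ ↦ ?_⟩
  · have hzero (β : GaloisField 2 m) (hβ : β ∈ quadraticConjugates m R α⁻¹) : aeval β c = 0 :=
      aeval_eq_zero_of_dvd_aeval_eq_zero hdvd ((aeval_genPoly_eq_zero_iff hα hm hR hf).2 hβ)
    exact ⟨hzero 1 (mem_quadraticConjugates.2 (.inl rfl)), fun r hr ↦ (hconj r 0).1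
      (hzero _ (mem_quadraticConjugates.2 (.inr ⟨r, hr, 0, by omega, rfl⟩)))⟩
  · refine dvd_of_forall_aeval_eq_zero (L := GaloisField 2 m) (separable_genPoly (by omega))
      (splits_genPoly hα (by omega)) fun β hβ ↦ ?_
    rcases mem_quadraticConjugates.1 ((aeval_genPoly_eq_zero_iff hα hm hR hf).1 hβ) with
      rfl | ⟨r, hrR, i, -, rfl⟩
    · exact h1
    · exact (hconj r i).2 (hr r hrR)

theorem card_mul_add_one_le_natDegree_genPoly (hα : IsPrimitiveRoot α (2 ^ m - 1)) (hm : 2 ≤ m)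
    (hR : ∀ r ∈ R, 2 * r < m) (hf : HasQuadraticTrace R f) :
    R.card * m + 1 ≤ (genPoly m α f).natDegree := by
  rw [← card_quadraticConjugates hα.inv hm hR,
    ← natDegree_map (algebraMap (ZMod 2) (GaloisField 2 m))]
  refine card_le_degree_of_subset_roots fun β hβ ↦ ?_
  rw [mem_roots_map (separable_genPoly (by omega)).ne_zero]
  exact (aeval_genPoly_eq_zero_iff hα hm hR hf).2 hβ

theorem natDegree_prod_minpoly_le (R : Finset ℕ) (β : ℕ → GaloisField 2 m) (hm : m ≠ 0) :
    ((X - 1) * ∏ r ∈ R, minpoly (ZMod 2) (β r)).natDegree ≤ R.card * m + 1 := by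
  have hle : (∏ r ∈ R, minpoly (ZMod 2) (β r)).natDegree ≤ R.card * m := by
    refine (natDegree_prod_le _ _).trans (Finset.sum_le_card_nsmul _ _ _ fun r _ ↦ ?_)
    simpa only [GaloisField.finrank 2 hm] using minpoly.natDegree_le (A := ZMod 2) (β r)
  exact (natDegree_mul_le_of_le (natDegree_X_sub_C_le 1) hle).trans_eq (add_comm _ _)

theorem genPoly_eq_prod_minpoly_s5 (hα : IsPrimitiveRoot α (2 ^ m - 1)) (hm : 2 ≤ m)
    (hR : ∀ r ∈ R, 2 * r < m) (hf : HasQuadraticTrace R f) :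
    genPoly m α f = (X - 1) * ∏ r ∈ R, minpoly (ZMod 2) (α⁻¹ ^ (2 ^ r + 1)) := by
  have hdvd : genPoly m α f ∣ (X - 1) * ∏ r ∈ R, minpoly (ZMod 2) (α⁻¹ ^ (2 ^ r + 1)) := by
    refine (genPoly_dvd_iff hα hm hR hf).2 ⟨by simp, fun r hr ↦ ?_⟩
    rw [map_mul, map_prod, Finset.prod_eq_zero hr (minpoly.aeval _ _), mul_zero]
  have hmonic : ((X - 1) * ∏ r ∈ R, minpoly (ZMod 2) (α⁻¹ ^ (2 ^ r + 1))).Monic :=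
    (monic_X_sub_C 1).mul (monic_prod_of_monic _ _ fun r _ ↦ minpoly.monic (.of_finite _ _))
  exact (eq_of_monic_of_dvd_of_natDegree_le
    (monic_of_ne_zero_zmod_two (separable_genPoly (by omega)).ne_zero) hmonic hdvd
    ((natDegree_prod_minpoly_le R _ (by omega)).trans
      (card_mul_add_one_le_natDegree_genPoly hα hm hR hf))).symm

theorem natDegree_genPoly (hα : IsPrimitiveRoot α (2 ^ m - 1)) (hm : 2 ≤ m)
    (hR : ∀ r ∈ R, 2 * r < m) (hf : HasQuadraticTrace R f) :
    (genPoly m α f).natDegree = R.card * m + 1 := by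
  refine le_antisymm ?_ (card_mul_add_one_le_natDegree_genPoly hα hm hR hf)
  rw [genPoly_eq_prod_minpoly_s5 hα hm hR hf]
  exact natDegree_prod_minpoly_le R _ (by omega)

end Sequence

section Locators

variable {F : Type*} [Field F] {γ : F} {v : ℕ} {c : (ZMod 2)[X]}

/-- The locators of a binary word `c`: the powers of `γ` whose exponents are the positions of the
nonzero coefficients of `c`. -/
noncomputable def locators (γ : F) (c : (ZMod 2)[X]) : Finset F :=
  c.support.image (γ ^ ·)

theorem injOn_pow_support (hγ : IsPrimitiveRoot γ v) (hc : c.degree < v) :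
    Set.InjOn (γ ^ ·) (c.support : Set ℕ) := by
  have hlt : ∀ t ∈ c.support, t < v := fun t ht ↦
    Nat.cast_lt.1 ((le_degree_of_mem_supp t ht).trans_lt hc)
  exact fun s hs t ht h ↦ hγ.pow_inj (hlt s hs) (hlt t ht) h

theorem card_locators (hγ : IsPrimitiveRoot γ v) (hc : c.degree < v) :
    (locators γ c).card = c.support.card :=
  Finset.card_image_of_injOn (injOn_pow_support hγ hc)

theorem aeval_pow_eq_sum_locators [Algebra (ZMod 2) F] (hγ : IsPrimitiveRoot γ v)
    (hc : c.degree < v) (e : ℕ) : aeval (γ ^ e) c = ∑ x ∈ locators γ c, x ^ e := by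
  rw [locators, Finset.sum_image (injOn_pow_support hγ hc), aeval_def, eval₂_eq_sum, sum_def]
  refine Finset.sum_congr rfl fun t ht ↦ ?_
  rw [eq_one_of_ne_zero_zmod_two (mem_support_iff.1 ht), map_one, one_mul, ← pow_mul, ← pow_mul,
    mul_comm]

theorem exists_locators_eq (hγ : IsPrimitiveRoot γ v) (hv : v ≠ 0) {A : Finset F}
    (hA : ∀ x ∈ A, x ^ v = 1) : ∃ c : (ZMod 2)[X], c.degree < v ∧ locators γ c = A := by
  have : NeZero v := ⟨hv⟩
  have hsupp : (∑ t ∈ Finset.range v with γ ^ t ∈ A, X ^ t : (ZMod 2)[X]).support =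
      {t ∈ Finset.range v | γ ^ t ∈ A} := by
    ext t
    simp [coeff_X_pow]
  refine ⟨∑ t ∈ Finset.range v with γ ^ t ∈ A, X ^ t, ?_, ?_⟩
  · refine (degree_sum_le _ _).trans_lt
      ((Finset.sup_lt_iff (WithBot.bot_lt_coe v)).2 fun t ht ↦ ?_)
    rw [degree_X_pow]
    exact Nat.cast_lt.2 (Finset.mem_range.1 (Finset.mem_filter.1 ht).1)
  · ext x
    simp only [locators, hsupp, Finset.mem_image, Finset.mem_filter, Finset.mem_range]
    constructor
    · rintro ⟨t, ⟨-, ht⟩, rfl⟩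
      exact ht
    · intro hx
      obtain ⟨t, ht, rfl⟩ := hγ.eq_pow_of_pow_eq_one (hA x hx)
      exact ⟨t, ⟨ht, hx⟩, rfl⟩

end Locators

section FlatOfWeightEight

/- The first-order Reed–Muller code of length `8` is self-orthogonal. -/
theorem sum_cons_one_mul_cons_one (i j : Fin 4) :
    ∑ z : Fin 3 → ZMod 2, (Fin.cons 1 z : Fin 4 → ZMod 2) i * (Fin.cons 1 z : Fin 4 → ZMod 2) j =
      0 := by
  revert i j
  decide

theorem sum_bilin_linearCombination_cons_one_eq_zero {M N : Type*} [AddCommGroup M]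
    [Module (ZMod 2) M] [AddCommGroup N] [Module (ZMod 2) N]
    (B : M →ₗ[ZMod 2] M →ₗ[ZMod 2] N) (u : Fin 4 → M) :
    ∑ z : Fin 3 → ZMod 2, B (Fintype.linearCombination (ZMod 2) u (Fin.cons 1 z))
      (Fintype.linearCombination (ZMod 2) u (Fin.cons 1 z)) = 0 := by
  simp only [Fintype.linearCombination_apply, map_sum, map_smul, LinearMap.sum_apply,
    LinearMap.smul_apply, Finset.smul_sum, smul_smul]
  rw [Finset.sum_comm]
  refine Finset.sum_eq_zero fun i _ ↦ ?_
  rw [Finset.sum_comm]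
  refine Finset.sum_eq_zero fun j _ ↦ ?_
  rw [← Finset.sum_smul, sum_cons_one_mul_cons_one, zero_smul]

/- Any affine `3`-flat that avoids the origin will do, because `x ^ (2 ^ r + 1) = x ^ 2 ^ r * x` is
a bilinear form on the diagonal. -/
theorem exists_card_eq_eight_sum_pow_eq_zero {F : Type*} [Field F] [Algebra (ZMod 2) F]
    (hF : 4 ≤ Module.finrank (ZMod 2) F) :
    ∃ A : Finset F, A.card = 8 ∧ 0 ∉ A ∧ ∀ r, ∑ x ∈ A, x ^ (2 ^ r + 1) = 0 := by
  obtain ⟨u, hu⟩ := exists_linearIndependent_of_le_finrank hF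
  have hu_inj := linearIndependent_iff_injective_fintypeLinearCombination.1 hu
  let W : (Fin 3 → ZMod 2) → F := fun z ↦ Fintype.linearCombination (ZMod 2) u (Fin.cons 1 z)
  have hW : Function.Injective W := hu_inj.comp (Fin.cons_right_injective _)
  refine ⟨Finset.univ.image W, ?_, ?_, fun r ↦ ?_⟩
  · simp [Finset.card_image_of_injective _ hW]
  · simp only [Finset.mem_image, Finset.mem_univ, true_and, not_exists]
    intro z hz
    exact one_ne_zero (congrFun ((map_eq_zero_iff _ hu_inj).1 hz) 0)
  · let φ := FiniteField.frobeniusAlgHom (ZMod 2) F ^ r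
    have hφ (x : F) : φ x = x ^ 2 ^ r := by
      rw [AlgHom.coe_pow, FiniteField.coe_frobeniusAlgHom, pow_iterate, ZMod.card]
    rw [Finset.sum_image hW.injOn]
    simpa [pow_succ, hφ] using sum_bilin_linearCombination_cons_one_eq_zero
      (LinearMap.mul (ZMod 2) F ∘ₗ φ.toLinearMap) u

end FlatOfWeightEight

section Codewords

variable {m : ℕ} {R : Finset ℕ} {α : GaloisField 2 m} {f : GaloisField 2 m → GaloisField 2 m}

theorem pow_two_pow_eq_self (hm : m ≠ 0) (x : GaloisField 2 m) : x ^ 2 ^ m = x := by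
  have := Fintype.ofFinite (GaloisField 2 m)
  rw [← GaloisField.card 2 m hm, Nat.card_eq_fintype_card, FiniteField.pow_card]

theorem pow_two_pow_sub_one_eq_one (hm : m ≠ 0) {x : GaloisField 2 m} (hx : x ≠ 0) :
    x ^ (2 ^ m - 1) = 1 :=
  mul_right_cancel₀ hx <| by
    rw [← pow_succ, Nat.sub_add_cancel Nat.one_le_two_pow, pow_two_pow_eq_self hm, one_mul]

theorem mem_codeC_iff (hα : IsPrimitiveRoot α (2 ^ m - 1)) (hm : 2 ≤ m)
    (hR : ∀ r ∈ R, 2 * r < m) (hf : HasQuadraticTrace R f) {c : (ZMod 2)[X]} :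
    c ∈ codeC m α f ↔ c.degree < (2 ^ m - 1 : ℕ) ∧
      ((locators α⁻¹ c).card : GaloisField 2 m) = 0 ∧
      ∀ r ∈ R, ∑ x ∈ locators α⁻¹ c, x ^ (2 ^ r + 1) = 0 := by
  rw [codeC, Submodule.mem_inf, mem_degreeLT, Submodule.restrictScalars_mem,
    Ideal.mem_span_singleton, genPoly_dvd_iff hα hm hR hf]
  refine and_congr_right fun hc ↦ and_congr ?_ (forall₂_congr fun r _ ↦ ?_)
  · rw [← pow_zero α⁻¹, aeval_pow_eq_sum_locators hα.inv hc]
    simp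
  · rw [aeval_pow_eq_sum_locators hα.inv hc]

theorem eight_mem_wtSet_codeC (hα : IsPrimitiveRoot α (2 ^ m - 1)) (hm : 4 ≤ m)
    (hR : ∀ r ∈ R, 2 * r < m) (hf : HasQuadraticTrace R f) : 8 ∈ wtSet (codeC m α f) := by
  obtain ⟨A, hcard, hA0, hA⟩ := exists_card_eq_eight_sum_pow_eq_zero (F := GaloisField 2 m)
    (by rwa [GaloisField.finrank 2 (by omega)])
  have hv : 2 ^ m - 1 ≠ 0 := (odd_two_pow_sub_one (by omega)).pos.ne'
  obtain ⟨c, hc, rfl⟩ := exists_locators_eq hα.inv hv fun x hx ↦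
    pow_two_pow_sub_one_eq_one (by omega) (ne_of_mem_of_not_mem hx hA0)
  have hsupp : c.support.card = 8 := (card_locators hα.inv hc).symm.trans hcard
  refine ⟨c, (mem_codeC_iff hα (by omega) hR hf).2 ⟨hc, ?_, fun r _ ↦ hA r⟩, ?_, hsupp⟩
  · rw [hcard, CharP.cast_eq_zero_iff (GaloisField 2 m) 2]
    norm_num
  · rintro rfl
    simp at hsupp

theorem eight_le_of_mem_wtSet_codeC {h : ℕ} (hα : IsPrimitiveRoot α (2 ^ m - 1))
    (hm : m = 2 * h + 1) (hh : 1 < h) (hf : HasQuadraticTrace {0, 1, h} f) {w : ℕ}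
    (hw : w ∈ wtSet (codeC m α f)) : 8 ≤ w := by
  obtain ⟨c, hc, hc0, rfl⟩ := hw
  obtain ⟨hdeg, hcard, hsum⟩ :=
    (mem_codeC_iff hα (by omega) (by simp only [Finset.mem_insert, Finset.mem_singleton]; omega)
      hf).1 hc
  simp only [Finset.mem_insert, Finset.mem_singleton, forall_eq_or_imp, forall_eq, pow_zero,
    pow_one, Nat.reduceAdd] at hsum
  obtain ⟨h2, h3, hσ⟩ := hsum
  rw [← card_locators hα.inv hdeg]
  refine eight_le_card_of_sum_mul_eq_zero (σ := iterateFrobenius (GaloisField 2 m) 2 h)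
    (fun x ↦ ?_) ((support_nonempty.2 hc0).image _) hcard h2 h3 ?_
  · rw [iterateFrobenius_def, iterateFrobenius_def, ← pow_mul, ← pow_mul, ← pow_succ,
      ← pow_add, show h + (h + 1) = m by omega, pow_two_pow_eq_self (by omega)]
  · simpa only [iterateFrobenius_def, ← pow_succ'] using hσ

end Codewords

section TraceIdentity

theorem trace_pow_two_pow_s5 {F : Type*} [Field F] [Algebra (ZMod 2) F]
    [Algebra.IsAlgebraic (ZMod 2) F] (x : F) (i : ℕ) :
    Algebra.trace (ZMod 2) F (x ^ 2 ^ i) = Algebra.trace (ZMod 2) F x := by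
  simpa only [ZMod.card] using trace_pow_card_pow (ZMod 2) x i

theorem hasQuadraticTrace_of_forall_eq {m h : ℕ} {f : GaloisField 2 m → GaloisField 2 m}
    (hm : m = 2 * h + 1) (hh : 1 < h)
    (hf : ∀ x, f x = x + x ^ 3 + x ^ (2 ^ (h + 1) + 1)) : HasQuadraticTrace {0, 1, h} f := by
  intro y
  have hexpand : f (y + 1) =
      1 + (y + y ^ 2 ^ (h + 1)) + (y ^ 2 + y ^ 3 + y ^ (2 ^ (h + 1) + 1)) := by
    rw [hf, pow_succ (y + 1) (2 ^ (h + 1)), add_pow_char_pow, one_pow]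
    linear_combination (1 + 2 * y + y ^ 2) * CharTwo.two_eq_zero (R := GaloisField 2 m)
  have hcancel : Algebra.trace (ZMod 2) (GaloisField 2 m) (y + y ^ 2 ^ (h + 1)) = 0 := by
    rw [map_add, trace_pow_two_pow_s5, CharTwo.add_self_eq_zero]
  have hconj : (y ^ (2 ^ h + 1)) ^ 2 ^ (h + 1) = y ^ (2 ^ (h + 1) + 1) := by
    rw [← pow_mul, add_mul, ← pow_add, show h + (h + 1) = m by omega, pow_add,
      pow_two_pow_eq_self (by omega), one_mul, ← pow_succ']
  have hone : Algebra.trace (ZMod 2) (GaloisField 2 m) 1 = 1 := by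
    rw [← map_one (algebraMap (ZMod 2) _), Algebra.trace_algebraMap,
      GaloisField.finrank 2 (by omega), hm]
    simp [CharTwo.two_eq_zero]
  rw [hexpand, map_add, map_add _ 1, hone, hcancel, map_add, map_add, ← hconj, trace_pow_two_pow_s5,
    Finset.sum_insert (by grind), Finset.sum_insert (by grind), Finset.sum_singleton]
  simp only [pow_zero, pow_one, Nat.reduceAdd, add_zero, add_assoc]

end TraceIdentity

/-- Theorem 3: for f₃(x) = x + x^3 + x^{2^{(m+1)/2}+1} over 𝔽_{2^m},
m = 2h+1 ≥ 5, the minimal polynomial of the sequence s_t = Tr(f₃(α^t+1)) is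
(x−1)·m_{α^{−1}}(x)·m_{α^{−3}}(x)·m_{α^{−(2^h+1)}}(x) of degree 3m+1;
the code C_s has length 2^m−1, dimension 2^m−2−3m, and minimum distance
exactly 8. -/
theorem stmt5 (m h : ℕ) (hm : m = 2 * h + 1) (hm5 : 5 ≤ m)
    (α : GaloisField 2 m) (hα : orderOf α = 2 ^ m - 1)
    (f : GaloisField 2 m → GaloisField 2 m)
    (hf : ∀ x, f x = x + x ^ 3 + x ^ (2 ^ ((m + 1) / 2) + 1)) :
    genPoly m α f =
      (X - 1) * minpoly (ZMod 2) α⁻¹ * minpoly (ZMod 2) (α⁻¹ ^ 3) *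
        minpoly (ZMod 2) (α⁻¹ ^ (2 ^ h + 1)) ∧
    (genPoly m α f).natDegree = 3 * m + 1 ∧
    Module.finrank (ZMod 2) ↥(codeC m α f) = 2 ^ m - 2 - 3 * m ∧
    IsLeast (wtSet (codeC m α f)) 8 := by
  have hα' : IsPrimitiveRoot α (2 ^ m - 1) := IsPrimitiveRoot.iff_orderOf.2 hα
  have hR : ∀ r ∈ ({0, 1, h} : Finset ℕ), 2 * r < m := by
    simp only [Finset.mem_insert, Finset.mem_singleton]
    omega
  have hQ : HasQuadraticTrace {0, 1, h} f := hasQuadraticTrace_of_forall_eq hm (by omega) <| by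
    simpa only [show (m + 1) / 2 = h + 1 by omega] using hf
  have hdeg : (genPoly m α f).natDegree = 3 * m + 1 := by
    rw [natDegree_genPoly hα' (by omega) hR hQ, Finset.card_eq_three.2
      ⟨0, 1, h, by omega, by omega, by omega, rfl⟩]
  refine ⟨?_, hdeg, ?_, eight_mem_wtSet_codeC hα' (by omega) hR hQ, fun w hw ↦
    eight_le_of_mem_wtSet_codeC hα' hm (by omega) hQ hw⟩
  · have hconj : minpoly (ZMod 2) (α⁻¹ ^ 2) = minpoly (ZMod 2) α⁻¹ := by
      simpa only [ZMod.card, pow_one] using minpoly_pow_card_pow (ZMod 2) α⁻¹ 1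
    rw [genPoly_eq_prod_minpoly_s5 hα' (by omega) hR hQ, Finset.prod_insert (by grind),
      Finset.prod_insert (by grind), Finset.prod_singleton, ← hconj]
    simp only [pow_zero, pow_one, Nat.reduceAdd, mul_assoc]
  · rw [codeC, finrank_degreeLT_inf_span_singleton (separable_genPoly (by omega)).ne_zero, hdeg]
    omega
end
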